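/- arXiv:2207.09053 — 14 statements merged into one kernel-verified Lean document; each statement's English description precedes it below -/
import Mathlib

section
/- If a positive integer n is k-layered, then: (i) k divides σ(n); (ii) if k is even, then there exists an odd prime p that divides n to an odd power (i.e., the multiplicity of p in n is odd); and (iii) σ(n) ≥ k·n. -/
/-- A positive integer `n` is `k`-layered if the set of all positive divisors of `n`
can be partitioned into `k` pairwise disjoint subsets (here given by the fibers of a
coloring `c`) each of which has the same sum. -/
def IsKLayered (n k : ℕ) : Prop :=
  ∃ c : ℕ → Fin k,
    ∀ i j : Fin k,
      ∑ d ∈ n.divisors.filter (fun d => c d = i), d =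
      ∑ d ∈ n.divisors.filter (fun d => c d = j), d

/-- If no odd prime divides `n` to an odd power then the divisor sum of `n` is odd. -/
theorem odd_sum_divisors_aux (n : ℕ) (hn : n ≠ 0)
    (h : ∀ p : ℕ, p.Prime → Odd p → ¬ Odd (n.factorization p)) :
    Odd (∑ d ∈ n.divisors, d) := by
  rw [Nat.sum_divisors hn]
  refine Finset.prod_induction _ Odd (fun a b ha hb => ha.mul hb) odd_one ?_
  intro p hp
  have hpp := Nat.prime_of_mem_primeFactors hp
  rcases hpp.eq_two_or_odd' with rfl | hodd
  · rw [Finset.sum_range_succ']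
    refine Even.add_odd ?_ (by simp)
    refine Finset.even_sum _ (fun i _ => ?_)
    rw [pow_succ]
    exact even_two.mul_left _
  · have he := Nat.not_odd_iff_even.mp (h p hpp hodd)
    rw [Finset.odd_sum_iff_odd_card_odd]
    rw [Finset.filter_true_of_mem (fun i _ => hodd.pow), Finset.card_range]
    exact he.add_one

/-- If a positive integer `n` is `k`-layered, then (i) `k ∣ σ(n)`, (ii) if `k` is even
then some odd prime divides `n` to an odd power, and (iii) `σ(n) ≥ k * n`. -/
theorem layered_necessary_conditions (n k : ℕ) (hn : 0 < n) (hk : 0 < k)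
    (h : IsKLayered n k) :
    k ∣ (∑ d ∈ n.divisors, d) ∧
    (Even k → ∃ p : ℕ, p.Prime ∧ Odd p ∧ Odd (n.factorization p)) ∧
    k * n ≤ ∑ d ∈ n.divisors, d := by
  obtain ⟨c, hc⟩ := h
  have key : ∑ d ∈ n.divisors, d
      = k * ∑ d ∈ n.divisors.filter (fun d => c d = c n), d := by
    rw [← Finset.sum_fiberwise n.divisors c (fun d => d),
      Finset.sum_congr rfl (fun i _ => hc i (c n))]
    simp
  have hdvd : k ∣ ∑ d ∈ n.divisors, d := ⟨_, key⟩
  refine ⟨hdvd, ?_, ?_⟩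
  · intro hev
    by_contra hcon
    push Not at hcon
    have hodd := odd_sum_divisors_aux n hn.ne'
      (fun p hp ho => by simpa using hcon p hp ho)
    exact Nat.not_even_iff_odd.mpr hodd (hev.trans_dvd hdvd)
  · rw [key]
    refine Nat.mul_le_mul_left k ?_
    exact Finset.single_le_sum (f := fun d => d) (fun _ _ => Nat.zero_le _)
      (by simp [hn.ne'])
end

section
/- If a positive integer n is k-layered and w is a positive integer relatively prime to n, then n·w is k-layered. -/
/-- If a positive integer `n` is `k`-layered and `w` is a positive integer relatively
prime to `n`, then `n * w` is `k`-layered. -/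
theorem layered_mul_coprime (n k w : ℕ) (hn : 0 < n) (hw : 0 < w)
    (h : IsKLayered n k) (hcop : Nat.Coprime n w) :
    IsKLayered (n * w) k := by
  obtain ⟨c, hc⟩ := h
  have key : ∀ i : Fin k,
      ∑ d ∈ (n * w).divisors.filter (fun d => c (d.gcd n) = i), d =
      (∑ d ∈ n.divisors.filter (fun d => c d = i), d) * ∑ e ∈ w.divisors, e := by
    intro i
    rw [Finset.sum_mul_sum, ← Finset.sum_product']
    symm
    refine Finset.sum_nbij' (fun p => p.1 * p.2) (fun d => (d.gcd n, d.gcd w)) ?_ ?_ ?_ ?_ ?_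
    · rintro ⟨a, b⟩ hp
      simp only [Finset.mem_product, Finset.mem_filter, Nat.mem_divisors] at hp ⊢
      obtain ⟨⟨⟨ha, -⟩, hi⟩, hb, -⟩ := hp
      refine ⟨⟨mul_dvd_mul ha hb, by positivity⟩, ?_⟩
      rw [Nat.Coprime.gcd_mul_right_cancel a (hcop.symm.coprime_dvd_left hb),
        Nat.gcd_eq_left ha, hi]
    · intro d hd
      simp only [Finset.mem_product, Finset.mem_filter, Nat.mem_divisors] at hd ⊢
      exact ⟨⟨⟨Nat.gcd_dvd_right _ _, hn.ne'⟩, hd.2⟩, Nat.gcd_dvd_right _ _, hw.ne'⟩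
    · rintro ⟨a, b⟩ hp
      simp only [Finset.mem_product, Finset.mem_filter, Nat.mem_divisors] at hp ⊢
      obtain ⟨⟨⟨ha, -⟩, hi⟩, hb, -⟩ := hp
      rw [Nat.Coprime.gcd_mul_right_cancel a (hcop.symm.coprime_dvd_left hb),
        Nat.gcd_eq_left ha, Nat.Coprime.gcd_mul_left_cancel b (hcop.coprime_dvd_left ha),
        Nat.gcd_eq_left hb]
    · intro d hd
      simp only [Finset.mem_filter, Nat.mem_divisors] at hd ⊢
      rw [← hcop.gcd_mul d, Nat.gcd_eq_left hd.1.1]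
    · intro p _
      rfl
  refine ⟨fun d => c (d.gcd n), fun i j => ?_⟩
  rw [key i, key j, hc i j]
end

section
/- Let m and n be positive integers with gcd(m, n) = 1. If m is k-layered and n is k'-layered, then m·n is (k·k')-layered. -/
/-- If `m` is `k`-layered, `n` is `k'`-layered and `gcd(m, n) = 1`,
then `m * n` is `(k * k')`-layered. -/
theorem layered_mul_layered (m n k k' : ℕ) (hm : 0 < m) (hn : 0 < n)
    (hcop : Nat.Coprime m n) (h1 : IsKLayered m k) (h2 : IsKLayered n k') :
    IsKLayered (m * n) (k * k') := by
  obtain ⟨c, hc⟩ := h1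
  obtain ⟨e, he⟩ := h2
  have key : ∀ i : Fin (k * k'),
      ∑ d ∈ (m * n).divisors.filter
        (fun d => finProdFinEquiv (c (d.gcd m), e (d.gcd n)) = i), d =
      (∑ d ∈ m.divisors.filter (fun d => c d = (finProdFinEquiv.symm i).1), d) *
      (∑ d ∈ n.divisors.filter (fun d => e d = (finProdFinEquiv.symm i).2), d) := by
    intro i
    obtain ⟨⟨a, b⟩, rfl⟩ := finProdFinEquiv.surjective i
    rw [Finset.sum_mul_sum, ← Finset.sum_product']
    have g : ∀ x y, x ∣ m → y ∣ n → (x * y).gcd m = x ∧ (x * y).gcd n = y := by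
      intro x y hx hy
      have hy' : Nat.Coprime y m := (hcop.coprime_dvd_right hy).symm
      have hx' : Nat.Coprime x n := hcop.coprime_dvd_left hx
      constructor
      · rw [hy'.gcd_mul_right_cancel, Nat.gcd_eq_left hx]
      · rw [hx'.gcd_mul_left_cancel, Nat.gcd_eq_left hy]
    have g2 : ∀ d, d ∣ m * n → d.gcd m * d.gcd n = d := by
      intro d hd
      rw [← hcop.gcd_mul, Nat.gcd_eq_left hd]
    refine Finset.sum_nbij' (fun d => (d.gcd m, d.gcd n)) (fun p => p.1 * p.2) ?_ ?_ ?_ ?_ ?_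
    · intro d hd
      simp only [Finset.mem_filter, Nat.mem_divisors, EmbeddingLike.apply_eq_iff_eq,
        Prod.mk.injEq] at hd
      simp [Nat.gcd_dvd_right, hm.ne', hn.ne', hd.2.1, hd.2.2]
    · rintro ⟨x, y⟩ h
      simp only [Finset.mem_product, Finset.mem_filter, Nat.mem_divisors,
        Equiv.symm_apply_apply] at h
      obtain ⟨⟨⟨hx, _⟩, hcx⟩, ⟨hy, _⟩, hey⟩ := h
      simp [g x y hx hy, hcx, hey, hm.ne', hn.ne', mul_dvd_mul hx hy]
    · intro d hd
      exact g2 d (Nat.dvd_of_mem_divisors (Finset.mem_filter.1 hd).1)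
    · rintro ⟨x, y⟩ h
      simp only [Finset.mem_product, Finset.mem_filter, Nat.mem_divisors] at h
      simp [g x y h.1.1.1 h.2.1.1]
    · intro d hd
      exact (g2 d (Nat.dvd_of_mem_divisors (Finset.mem_filter.1 hd).1)).symm
  refine ⟨fun d => finProdFinEquiv (c (d.gcd m), e (d.gcd n)), fun i j => ?_⟩
  rw [key i, key j, hc _ (finProdFinEquiv.symm j).1, he _ (finProdFinEquiv.symm j).2]
end

section
/- Let n ≠ 3 be an almost practical number. Then n is a Zumkeller number if and only if σ(n) is even. -/
/-- A positive integer `n` is almost practical if every integer `j` with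
`2 < j < σ(n) - 2` can be written as a sum of distinct positive divisors of `n`. -/
def AlmostPractical (n : ℕ) : Prop :=
  ∀ j : ℕ, 2 < j → j + 2 < ∑ d ∈ n.divisors, d →
    ∃ S ⊆ n.divisors, ∑ d ∈ S, d = j

/-- Let `n ≠ 3` be an almost practical number. Then `n` is a Zumkeller number
(i.e., 2-layered) if and only if `σ(n)` is even. -/
theorem almostPractical_zumkeller_iff (n : ℕ) (hn : 0 < n) (hn3 : n ≠ 3)
    (hap : AlmostPractical n) :
    IsKLayered n 2 ↔ Even (∑ d ∈ n.divisors, d) := by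
  constructor
  · rintro ⟨c, hc⟩
    have h := Finset.sum_filter_add_sum_filter_not n.divisors (fun d => c d = 0) (fun d => d)
    have h2 : n.divisors.filter (fun d => ¬ c d = 0) = n.divisors.filter (fun d => c d = 1) := by
      apply Finset.filter_congr
      intro d _
      generalize c d = x
      fin_cases x <;> simp
    rw [h2, hc 0 1] at h
    exact ⟨_, h.symm⟩
  · rintro ⟨m, hm⟩
    have hm2 : 2 < m := by
      rcases Nat.lt_or_ge n 4 with h4 | h4
      · exfalso
        interval_cases n
        · have : ∑ d ∈ Nat.divisors 1, d = 1 := by decide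
          omega
        · have : ∑ d ∈ Nat.divisors 2, d = 3 := by decide
          omega
        · exact hn3 rfl
      · have hsub : ({1, n} : Finset ℕ) ⊆ n.divisors := by
          intro x hx
          simp only [Finset.mem_insert, Finset.mem_singleton] at hx
          rcases hx with rfl | rfl <;> simp <;> omega
        have hle := Finset.sum_le_sum_of_subset (f := fun d => d) hsub
        rw [Finset.sum_pair (by omega)] at hle
        omega
    obtain ⟨S, hS, hsum⟩ := hap m hm2 (by omega)
    have h := Finset.sum_filter_add_sum_filter_not n.divisors (fun d => d ∈ S) (fun d => d)
    have hf : n.divisors.filter (fun d => d ∈ S) = S := by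
      ext x
      simp only [Finset.mem_filter]
      exact ⟨fun h => h.2, fun h => ⟨hS h, h⟩⟩
    rw [hf] at h
    have key : ∀ i : Fin 2, ∑ d ∈ n.divisors.filter
        (fun d => (if d ∈ S then (0 : Fin 2) else 1) = i), d = m := by
      intro i
      fin_cases i
      · have : n.divisors.filter (fun d => (if d ∈ S then (0 : Fin 2) else 1) = 0)
            = n.divisors.filter (fun d => d ∈ S) := by
          apply Finset.filter_congr
          intro d _
          split_ifs <;> simp_all
        simp only [Fin.zero_eta]
        rw [this, hf, hsum]
      · have : n.divisors.filter (fun d => (if d ∈ S then (0 : Fin 2) else 1) = 1)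
            = n.divisors.filter (fun d => ¬ d ∈ S) := by
          apply Finset.filter_congr
          intro d _
          split_ifs <;> simp_all
        simp only [Fin.mk_one]
        rw [this]
        omega
    exact ⟨fun d => if d ∈ S then 0 else 1, fun i j => (key i).trans (key j).symm⟩
end

section
/- Let α be a positive integer, let n be a positive integer that is not k-layered, and let p be a prime with gcd(n, p) = 1. If n·p^α is k-layered, then p ≤ σ(n). Moreover, if q is a prime factor of k such that q does not divide σ(n), then q divides σ(p^α). -/
/-- Let `α ≥ 1`, let `n` be a positive integer that is not `k`-layered and `p` a prime
coprime to `n`. If `n * p ^ α` is `k`-layered, then `p ≤ σ(n)`; moreover every prime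
factor `q` of `k` not dividing `σ(n)` divides `σ(p ^ α)`. -/
theorem layered_prime_power_mul (n k p α : ℕ) (hn : 0 < n) (hα : 0 < α)
    (hp : p.Prime) (hcop : Nat.Coprime n p) (hnk : ¬ IsKLayered n k)
    (h : IsKLayered (n * p ^ α) k) :
    p ≤ (∑ d ∈ n.divisors, d) ∧
    ∀ q : ℕ, q.Prime → q ∣ k → ¬ q ∣ (∑ d ∈ n.divisors, d) →
      q ∣ (∑ d ∈ (p ^ α).divisors, d) := by
  obtain ⟨c, hc⟩ := h
  constructor
  · by_contra hlt
    push Not at hlt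
    apply hnk
    refine ⟨c, ?_⟩
    have hlt' : ∀ i, ∑ d ∈ n.divisors.filter (fun d => c d = i), d < p := fun i =>
      lt_of_le_of_lt (Finset.sum_le_sum_of_subset (Finset.filter_subset _ _)) hlt
    have key : ∀ i, ∑ d ∈ (n * p ^ α).divisors.filter (fun d => c d = i), d ≡
        ∑ d ∈ n.divisors.filter (fun d => c d = i), d [MOD p] := by
      intro i
      rw [← Finset.sum_filter_add_sum_filter_not _ (fun d => p ∣ d)]
      have h1 : ((n * p ^ α).divisors.filter (fun d => c d = i)).filter (fun d => ¬ p ∣ d)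
          = n.divisors.filter (fun d => c d = i) := by
        ext d
        simp only [Finset.mem_filter, Nat.mem_divisors]
        constructor
        · rintro ⟨⟨⟨hd, _⟩, hi⟩, hpd⟩
          refine ⟨⟨?_, hn.ne'⟩, hi⟩
          have : Nat.Coprime d (p ^ α) :=
            (((Nat.Prime.coprime_iff_not_dvd hp).2 hpd).symm).pow_right α
          exact this.dvd_of_dvd_mul_right hd
        · rintro ⟨⟨hd, _⟩, hi⟩
          refine ⟨⟨⟨hd.mul_right _, mul_ne_zero hn.ne' (pow_ne_zero _ hp.ne_zero)⟩, hi⟩, ?_⟩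
          intro hpd
          exact (Nat.Prime.coprime_iff_not_dvd hp).1 hcop.symm (hpd.trans hd)
      rw [h1]
      have h2 : p ∣ ∑ d ∈ ((n * p ^ α).divisors.filter (fun d => c d = i)).filter
          (fun d => p ∣ d), d :=
        Finset.dvd_sum fun d hd => (Finset.mem_filter.1 hd).2
      have h4 := (Nat.modEq_zero_iff_dvd.2 h2).add_right
        (∑ d ∈ n.divisors.filter (fun d => c d = i), d)
      rwa [zero_add] at h4
    intro i j
    have h5 := key i
    rw [hc i j] at h5
    have h3 := h5.symm.trans (key j)
    exact h3.eq_of_lt_of_lt (hlt' i) (hlt' j)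
  · intro q hq hqk hqn
    have hmul : (∑ d ∈ (n * p ^ α).divisors, d) =
        (∑ d ∈ n.divisors, d) * ∑ d ∈ (p ^ α).divisors, d :=
      Nat.Coprime.sum_divisors_mul (hcop.pow_right α)
    have hk : k ∣ ∑ d ∈ (n * p ^ α).divisors, d := by
      rw [← Finset.sum_fiberwise (n * p ^ α).divisors c,
        Finset.sum_congr rfl (fun i _ => hc i (c 0))]
      simp
    have := hqk.trans hk
    rw [hmul] at this
    exact (hq.dvd_mul.1 this).resolve_left hqn
end

section
/- The number 120 is the smallest 3-layered number: 120 is 3-layered and no positive integer m < 120 is 3-layered. -/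
/-- Below `120`, the sum of divisors of `m` is less than `3 * m`. -/
theorem sum_divisors_lt : ∀ m < 120, 0 < m → ∑ d ∈ Nat.divisors m, d < 3 * m := by
  decide +kernel

/-- `120` is the smallest `3`-layered number. -/
theorem smallest_three_layered :
    IsKLayered 120 3 ∧ ∀ m : ℕ, 0 < m → m < 120 → ¬ IsKLayered m 3 := by
  constructor
  · refine ⟨fun d => if d = 120 then 0 else if d = 60 ∨ d = 40 ∨ d = 20 then 1 else 2, ?_⟩
    decide +kernel
  · rintro m hm hlt ⟨c, hc⟩
    have h1 := sum_divisors_lt m hlt hm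
    have h2 : ∑ i : Fin 3, ∑ d ∈ m.divisors.filter (fun d => c d = i), d
        = ∑ d ∈ m.divisors, d := Finset.sum_fiberwise _ _ _
    have h3 : m ≤ ∑ d ∈ m.divisors.filter (fun d => c d = c m), d :=
      Finset.single_le_sum (f := fun d => d) (fun _ _ => Nat.zero_le _)
        (by simp [hm.ne'])
    rw [Finset.sum_congr rfl (fun i _ => hc i (c m))] at h2
    simp only [Finset.sum_const, Finset.card_univ, Fintype.card_fin, smul_eq_mul] at h2
    omega
end

section
/- The number 27720 is the smallest 4-layered number: 27720 is 4-layered and no positive integer m < 27720 is 4-layered. -/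
/-- Search certificate: `chk f p s t = true` implies that `t * σ(r) < 4 * s * r` for every positive
`r` whose prime factors are all at least `p` and which satisfies `s * r < 27720`. -/
def chk : ℕ → ℕ → ℕ → ℕ → Bool
  | 0, _, _, _ => false
  | f + 1, p, s, t =>
    (List.range 15).any (fun k =>
      decide (27720 ≤ s * p ^ (k + 1)) && decide (t * p ^ k < 4 * s * (p - 1) ^ k)) ||
    (List.range 15).all (fun a =>
      (decide (0 < a) && [4, 6, 8, 9, 10, 12].contains p) ||
      decide (27720 ≤ s * p ^ a) ||
      chk f (p + 1) (s * p ^ a) (t * ((List.range (a + 1)).map (fun i => p ^ i)).sum))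

open ArithmeticFunction in
lemma sigma_prime_pow_bound (p q a : ℕ) (hp : 1 ≤ p) (hpq : p ≤ q) (hq : q.Prime) :
    sigma 1 (q ^ a) * (p - 1) ≤ q ^ a * p := by
  obtain ⟨p, rfl⟩ : ∃ x, p = x + 1 := ⟨p - 1, by omega⟩
  obtain ⟨q, rfl⟩ : ∃ x, q = x + 1 := ⟨q - 1, by omega⟩
  have h : sigma 1 ((q + 1) ^ a) * q + 1 = (q + 1) ^ (a + 1) := by
    rw [sigma_one_apply_prime_pow hq]
    clear hpq hq
    induction a with
    | zero => simp
    | succ a ih => rw [Finset.sum_range_succ, pow_succ (q + 1) (a + 1), ← ih]; nlinarith [ih]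
  simp only [Nat.add_sub_cancel]
  have hge : (q + 1) ^ a ≤ sigma 1 ((q + 1) ^ a) := by
    rw [sigma_one_apply]
    exact Finset.single_le_sum (f := fun d => d) (fun _ _ => Nat.zero_le _)
      (Nat.mem_divisors_self _ (by positivity))
  have h0 : sigma 1 ((q + 1) ^ a) * q ≤ (q + 1) ^ a * (q + 1) := by
    rw [← pow_succ]; omega
  nlinarith

open ArithmeticFunction in
lemma sigma_rough_bound (p : ℕ) (hp : 2 ≤ p) (k : ℕ) : ∀ r : ℕ, 0 < r →
    (∀ q : ℕ, q.Prime → q ∣ r → p ≤ q) → r < p ^ (k + 1) →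
    sigma 1 r * (p - 1) ^ k ≤ r * p ^ k := by
  induction k with
  | zero =>
    intro r hr h hlt
    have : r = 1 := by
      by_contra hne
      have h1 := h _ (Nat.minFac_prime hne) (Nat.minFac_dvd r)
      have h2 := Nat.minFac_le hr
      simp at hlt
      omega
    subst this
    simp
  | succ k ih =>
    intro r hr h hlt
    by_cases hne : r = 1
    · subst hne
      simp
      exact Nat.pow_le_pow_left (by omega) _
    · have hq := Nat.minFac_prime hne
      have hqd := Nat.minFac_dvd r
      set q := r.minFac
      have hpq := h q hq hqd
      obtain ⟨a, m, hm, hrm⟩ := Nat.exists_eq_pow_mul_and_not_dvd hr.ne' q hq.ne_one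
      have hm0 : 0 < m := Nat.pos_of_ne_zero (by rintro rfl; simp at hm)
      have ha : a ≠ 0 := by
        rintro rfl
        apply hm
        rw [hrm] at hqd
        simpa using hqd
      have hcop : Nat.Coprime (q ^ a) m := ((Nat.Prime.coprime_iff_not_dvd hq).2 hm).pow_left a
      have hqa : p ≤ q ^ a := hpq.trans (Nat.le_self_pow ha q)
      have hmlt : m < p ^ (k + 1) := by
        by_contra hc
        push Not at hc
        have := Nat.mul_le_mul hqa hc
        rw [← hrm] at this
        rw [pow_succ' p (k + 1)] at hlt
        omega
      have h1 := ih m hm0 (fun x hx hd => h x hx (hrm ▸ hd.mul_left _)) hmlt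
      have h2 := sigma_prime_pow_bound p q a (by omega) hpq hq
      have h3 : sigma 1 r = sigma 1 (q ^ a) * sigma 1 m := by
        rw [hrm]; exact isMultiplicative_sigma.map_mul_of_coprime hcop
      calc sigma 1 r * (p - 1) ^ (k + 1)
          = (sigma 1 (q ^ a) * (p - 1)) * (sigma 1 m * (p - 1) ^ k) := by rw [h3]; ring
        _ ≤ (q ^ a * p) * (m * p ^ k) := Nat.mul_le_mul h2 h1
        _ = r * p ^ (k + 1) := by rw [hrm]; ring

open ArithmeticFunction in
lemma chk_sound (f : ℕ) : ∀ p s t : ℕ, 2 ≤ p → 0 < s → chk f p s t = true → ∀ r : ℕ, 0 < r →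
    (∀ q : ℕ, q.Prime → q ∣ r → p ≤ q) → s * r < 27720 → t * sigma 1 r < 4 * s * r := by
  induction f with
  | zero => intro p s t _ _ h; simp [chk] at h
  | succ f ih =>
    intro p s t hp hs h r hr hq hlt
    rw [chk, Bool.or_eq_true] at h
    rcases h with h | h
    · rw [List.any_eq_true] at h
      obtain ⟨k, -, hk⟩ := h
      simp only [Bool.and_eq_true, decide_eq_true_eq] at hk
      obtain ⟨hk1, hk2⟩ := hk
      have hrp : r < p ^ (k + 1) := by
        by_contra hc
        push Not at hc
        have := Nat.mul_le_mul_left s hc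
        omega
      have hb := sigma_rough_bound p hp k r hr hq hrp
      have hpos : 0 < (p - 1) ^ k := Nat.pow_pos (by omega)
      refine lt_of_mul_lt_mul_right (a := (p - 1) ^ k) ?_ (Nat.zero_le _)
      calc t * sigma 1 r * (p - 1) ^ k = t * (sigma 1 r * (p - 1) ^ k) := by ring
        _ ≤ t * (r * p ^ k) := Nat.mul_le_mul_left _ hb
        _ = (t * p ^ k) * r := by ring
        _ < (4 * s * (p - 1) ^ k) * r := Nat.mul_lt_mul_of_pos_right hk2 hr
        _ = 4 * s * r * (p - 1) ^ k := by ring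
    · rw [List.all_eq_true] at h
      by_cases hpp : p.Prime
      · obtain ⟨a, m, hm, hrm⟩ := Nat.exists_eq_pow_mul_and_not_dvd hr.ne' p hpp.ne_one
        have hm0 : 0 < m := Nat.pos_of_ne_zero (by rintro rfl; simp at hm)
        have hle : s * p ^ a ≤ s * r := by
          rw [hrm]; exact Nat.mul_le_mul_left _ (Nat.le_mul_of_pos_right _ hm0)
        have ha : a < 15 := by
          by_contra hc
          push Not at hc
          have h1 : 2 ^ 15 ≤ p ^ a :=
            (Nat.pow_le_pow_left hp 15).trans (Nat.pow_le_pow_right (by omega) hc)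
          have h2 : p ^ a ≤ s * p ^ a := Nat.le_mul_of_pos_left _ hs
          norm_num at h1
          omega
        have hc := h a (List.mem_range.2 ha)
        have hnc : [4, 6, 8, 9, 10, 12].contains p = false := by
          by_contra hc
          have hmem : p ∈ [4, 6, 8, 9, 10, 12] := by
            rw [Bool.not_eq_false] at hc
            exact List.contains_iff_mem.1 hc
          simp only [List.mem_cons, List.not_mem_nil, or_false] at hmem
          rcases hmem with rfl | rfl | rfl | rfl | rfl | rfl <;> norm_num at hpp
        rw [hnc] at hc
        simp only [Bool.and_false, Bool.false_or, Bool.or_eq_true, decide_eq_true_eq] at hc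
        rcases hc with hc | hc
        · omega
        · have hcop : Nat.Coprime (p ^ a) m :=
            ((Nat.Prime.coprime_iff_not_dvd hpp).2 hm).pow_left a
          have h3 : sigma 1 r = sigma 1 (p ^ a) * sigma 1 m := by
            rw [hrm]; exact isMultiplicative_sigma.map_mul_of_coprime hcop
          have hsum : ((List.range (a + 1)).map (fun i => p ^ i)).sum = sigma 1 (p ^ a) := by
            rw [sigma_one_apply_prime_pow hpp]; rfl
          rw [hsum] at hc
          have := ih (p + 1) _ _ (by omega) (by positivity) hc m hm0
            (fun x hx hd => by
              have h1 := hq x hx (hrm ▸ hd.mul_left _)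
              have h2 : x ≠ p := by rintro rfl; exact hm hd
              omega)
            (by rw [mul_assoc, ← hrm]; exact hlt)
          rw [h3]
          calc _ = t * sigma 1 (p ^ a) * sigma 1 m := by ring
            _ < 4 * (s * p ^ a) * m := this
            _ = 4 * s * r := by rw [hrm]; ring
      · have hc := h 0 (by simp)
        simp at hc
        rcases hc with hc | hc
        · have := Nat.mul_le_mul_left s hr
          omega
        · exact ih (p + 1) s t (by omega) hs hc r hr
            (fun x hx hd => by
              have h1 := hq x hx hd
              have h2 : x ≠ p := by rintro rfl; exact hpp hx
              omega) hlt

lemma chk_main : chk 40 2 1 1 = true := by decide +kernel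

lemma layered_sum_ge {n : ℕ} (hn : 0 < n) (h : IsKLayered n 4) :
    4 * n ≤ ∑ d ∈ n.divisors, d := by
  obtain ⟨c, hc⟩ := h
  have h1 : ∑ d ∈ n.divisors, d = ∑ i : Fin 4, ∑ d ∈ n.divisors.filter (fun d => c d = i), d :=
    (Finset.sum_fiberwise _ _ _).symm
  have h2 : n ≤ ∑ d ∈ n.divisors.filter (fun d => c d = c n), d :=
    Finset.single_le_sum (f := fun d => d) (fun _ _ => Nat.zero_le _)
      (by simp [hn.ne'])
  rw [h1, Finset.sum_congr rfl (fun i _ => hc i (c n))]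
  simp
  exact h2

/-- An explicit coloring of the divisors of `27720`. -/
def layerColor (d : ℕ) : Fin 4 :=
  if [27720, 360].contains d then 0
  else if [13860, 630, 840, 1320, 1980, 2520, 6930].contains d then 1
  else if [9240, 420, 990, 1260, 1540, 1848, 2310, 2772, 3080, 4620].contains d then 2
  else 3

lemma layerColor_sum (i : Fin 4) :
    ∑ d ∈ (Nat.divisors 27720).filter (fun d => layerColor d = i), d = 28080 := by
  have h : Nat.divisors 27720 = (Nat.divisors 168 ×ˢ Nat.divisors 165).image
      (fun x => x.1 * x.2) := by
    rw [show (27720 : ℕ) = 168 * 165 by norm_num, Nat.divisors_mul]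
    rfl
  rw [h]
  revert i
  decide +kernel

/-- `27720` is the smallest `4`-layered number. -/
theorem smallest_four_layered :
    IsKLayered 27720 4 ∧ ∀ m : ℕ, 0 < m → m < 27720 → ¬ IsKLayered m 4 := by
  refine ⟨⟨layerColor, fun i j => by rw [layerColor_sum, layerColor_sum]⟩, fun m hm hlt h => ?_⟩
  have h1 := layered_sum_ge hm h
  have h2 := chk_sound 40 2 1 1 le_rfl one_pos chk_main m hm (fun q hq _ => hq.two_le) (by omega)
  rw [ArithmeticFunction.sigma_one_apply] at h2
  omega
end

section
/- Let α be a positive integer and let m be an odd positive integer. If n = 2^α·m is a good k-layered number (that is, 2^β·n is k-layered for every positive integer β, and n itself is k-layered), then k divides σ(m). -/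
theorem IsKLayered.dvd_sum {n k : ℕ} (h : IsKLayered n k) : k ∣ ∑ d ∈ n.divisors, d := by
  obtain ⟨c, hc⟩ := h
  rw [← Finset.sum_fiberwise n.divisors c (fun d => d),
    Finset.sum_congr rfl (fun i _ => hc i (c 1))]
  simp

theorem sum_divisors_two_pow_mul (a m : ℕ) (hm : Odd m) :
    ∑ d ∈ (2 ^ a * m).divisors, d
      = (∑ i ∈ Finset.range (a + 1), 2 ^ i) * ∑ d ∈ m.divisors, d := by
  have hc : Nat.Coprime (2 ^ a) m := (Nat.coprime_two_left.mpr hm).pow_left a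
  rw [hc.sum_divisors_mul, Nat.sum_divisors_prime_pow Nat.prime_two]

/-- Let `α ≥ 1` and let `m` be odd. If `n = 2 ^ α * m` is a good `k`-layered number
(that is, `n` is `k`-layered and `2 ^ β * n` is `k`-layered for every `β ≥ 1`),
then `k` divides `σ(m)`. -/
theorem good_layered_dvd_sigma_odd_part (k α m n : ℕ) (hα : 0 < α) (hm : Odd m)
    (hmpos : 0 < m) (hn : n = 2 ^ α * m)
    (hgood : IsKLayered n k ∧ ∀ β : ℕ, 0 < β → IsKLayered (2 ^ β * n) k) :
    k ∣ (∑ d ∈ m.divisors, d) := by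
  obtain ⟨h0, h1⟩ := hgood
  have h2 := h0.dvd_sum
  have h3 := (h1 1 one_pos).dvd_sum
  have e : 2 ^ 1 * n = 2 ^ (α + 1) * m := by rw [hn]; ring
  rw [e, sum_divisors_two_pow_mul _ _ hm, Finset.sum_range_succ'] at h3
  rw [hn, sum_divisors_two_pow_mul _ _ hm] at h2
  simp only [pow_succ, pow_zero, ← Finset.sum_mul, add_mul, one_mul] at h3
  refine (Nat.dvd_add_right ?_).mp h3
  rw [mul_right_comm]
  exact h2.mul_right 2
end

section
/- If n ≠ 3 is an odd almost practical number such that 6 divides σ(n), then 2^α·n is a 3-layered number for every positive integer α. -/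
/-- `Realizes m v`: the divisors of `m` can be coloured with colour sums `v`. -/
def Realizes (m : ℕ) (v : Fin 3 → ℕ) : Prop :=
  ∃ c : ℕ → Fin 3, ∀ i, ∑ d ∈ m.divisors.filter (fun d => c d = i), d = v i

theorem divisors_step (n a : ℕ) (hn : 0 < n) :
    (2 ^ (a + 1) * n).divisors =
      (2 ^ a * n).divisors ∪ n.divisors.image (fun d => 2 ^ (a + 1) * d) := by
  ext d
  simp only [Finset.mem_union, Finset.mem_image, Nat.mem_divisors]
  constructor
  · rintro ⟨h, -⟩
    by_cases h2 : 2 ^ (a + 1) ∣ d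
    · right
      obtain ⟨e, rfl⟩ := h2
      exact ⟨e, ⟨Nat.dvd_of_mul_dvd_mul_left (by positivity) h, hn.ne'⟩, rfl⟩
    · left
      refine ⟨?_, by positivity⟩
      obtain ⟨x, y, hx, hy, rfl⟩ := exists_dvd_and_dvd_of_dvd_mul h
      obtain ⟨k, hk, rfl⟩ := (Nat.dvd_prime_pow Nat.prime_two).1 hx
      have hk' : k ≠ a + 1 := by
        rintro rfl
        exact h2 (dvd_mul_right _ _)
      exact mul_dvd_mul (pow_dvd_pow 2 (by omega)) hy
  · rintro (⟨h, -⟩ | ⟨e, ⟨h, -⟩, rfl⟩)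
    · exact ⟨h.trans (mul_dvd_mul_right (pow_dvd_pow 2 (by omega)) n), by positivity⟩
    · exact ⟨mul_dvd_mul_left _ h, by positivity⟩

theorem not_dvd_step (n a e : ℕ) (hodd : Odd n) : ¬ (2 ^ (a + 1) * e ∣ 2 ^ a * n) := by
  intro h
  rw [pow_succ, mul_assoc] at h
  have h1 := Nat.dvd_of_mul_dvd_mul_left (by positivity) h
  have h2 : 2 ∣ n := (dvd_mul_right 2 e).trans h1
  rcases hodd with ⟨k, rfl⟩
  omega

theorem Realizes.step {n a : ℕ} (hn : 0 < n) (hodd : Odd n) {v w : Fin 3 → ℕ}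
    (hv : Realizes (2 ^ a * n) v) (hw : Realizes n w) :
    Realizes (2 ^ (a + 1) * n) (fun i => v i + 2 ^ (a + 1) * w i) := by
  obtain ⟨c, hc⟩ := hv
  obtain ⟨c', hc'⟩ := hw
  refine ⟨fun d => if d ∣ 2 ^ a * n then c d else c' (d / 2 ^ (a + 1)), fun i => ?_⟩
  beta_reduce
  rw [← hc i, ← hc' i, divisors_step n a hn, Finset.sum_filter, Finset.sum_union,
    Finset.sum_image, Finset.sum_filter, Finset.sum_filter, Finset.mul_sum]
  · congr 1
    · refine Finset.sum_congr rfl fun d hd => ?_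
      rw [if_pos (Nat.dvd_of_mem_divisors hd)]
    · refine Finset.sum_congr rfl fun d hd => ?_
      rw [if_neg (not_dvd_step n a d hodd), Nat.mul_div_cancel_left _ (by positivity)]
      split_ifs <;> simp
  · intro x _ y _ h
    exact Nat.eq_of_mul_eq_mul_left (by positivity) h
  · rw [Finset.disjoint_left]
    intro d hd hd'
    obtain ⟨e, -, rfl⟩ := Finset.mem_image.1 hd'
    exact not_dvd_step n a e hodd (Nat.dvd_of_mem_divisors hd)

theorem realizes_split {n t u : ℕ} (p q : Fin 3) (hpq : p ≠ q)
    (ht : ∃ S ⊆ n.divisors, ∑ d ∈ S, d = t) (hu : t + u = ∑ d ∈ n.divisors, d) :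
    Realizes n (fun i => if i = p then t else if i = q then u else 0) := by
  obtain ⟨S, hS, hSt⟩ := ht
  refine ⟨fun d => if d ∈ S then p else q, fun i => ?_⟩
  by_cases hp : i = p
  · subst hp
    have : n.divisors.filter (fun d => (if d ∈ S then i else q) = i) = S := by
      ext d
      have := @hS d
      simp only [Finset.mem_filter]
      split_ifs with h
      · simp [h, this h]
      · simp [h, hpq.symm]
    simp only [this, hSt, if_true]
  by_cases hq : i = q
  · subst hq
    have : n.divisors.filter (fun d => (if d ∈ S then p else i) = i) = n.divisors \ S := by
      ext d
      simp only [Finset.mem_filter, Finset.mem_sdiff]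
      split_ifs with h
      · simp [h, hpq]
      · simp [h]
    have h2 := Finset.sum_sdiff (f := fun d : ℕ => d) hS
    simp only [this, hp, if_false, if_true]
    omega
  · have : n.divisors.filter (fun d => (if d ∈ S then p else q) = i) = ∅ := by
      ext d
      simp only [Finset.mem_filter]
      split_ifs with h
      · simp [Ne.symm hp]
      · simp [Ne.symm hq]
    simp [this, hp, hq]

theorem sum_ge (n : ℕ) (hn : 0 < n) (hn3 : n ≠ 3)
    (hodd : Odd n) (hap : AlmostPractical n) (h6 : 6 ∣ (∑ d ∈ n.divisors, d)) :
    18 ≤ ∑ d ∈ n.divisors, d := by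
  have hpos : 0 < ∑ d ∈ n.divisors, d :=
    Finset.sum_pos (fun d hd => Nat.pos_of_mem_divisors hd) ⟨1, by simp [hn.ne']⟩
  have h3 : 3 ∣ n := by
    obtain ⟨T, hT, hs⟩ := hap 3 (by norm_num) (by omega)
    by_contra h
    have : T ⊆ {1} := by
      intro d hd
      have h1 : d ≤ 3 := hs ▸ Finset.single_le_sum (f := fun d : ℕ => d) (by simp) hd
      have h2 := Nat.dvd_of_mem_divisors (hT hd)
      have h4 : Odd d := hodd.of_dvd_nat h2
      rcases h4 with ⟨k, rfl⟩
      have : k = 0 ∨ k = 1 := by omega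
      rcases this with rfl | rfl
      · simp
      · exact absurd h2 h
    have h5 := Finset.sum_le_sum_of_subset (f := fun d : ℕ => d) this
    simp at h5
    omega
  have hsub : ({1, 3, n} : Finset ℕ) ⊆ n.divisors := by
    intro d hd
    simp only [Finset.mem_insert, Finset.mem_singleton] at hd
    rcases hd with rfl | rfl | rfl <;> simp [hn.ne', h3]
  have h5 := Finset.sum_le_sum_of_subset (f := fun d : ℕ => d) hsub
  have hn1 : n ≠ 1 := by rintro rfl; omega
  rw [Finset.sum_insert (by simp; omega), Finset.sum_insert (by simp; omega),
    Finset.sum_singleton] at h5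
  obtain ⟨k, rfl⟩ := hodd
  omega

theorem all_realizes (n s : ℕ) (hn : 0 < n) (hodd : Odd n) (hap : AlmostPractical n)
    (hs : ∑ d ∈ n.divisors, d = 6 * s) (hs3 : 3 ≤ s) (a : ℕ) :
    ∃ t, Realizes (2 ^ (a + 1) * n) (fun _ => t) := by
  have key : ∀ j, 2 < j → j + 2 < 6 * s → ∃ S ⊆ n.divisors, ∑ d ∈ S, d = j :=
    fun j h1 h2 => hap j h1 (hs ▸ h2)
  have hall : ∀ p q : Fin 3, p ≠ q →
      Realizes n (fun i => if i = p then 6 * s else if i = q then 0 else 0) := fun p q hpq =>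
    realizes_split p q hpq ⟨_, subset_rfl, hs⟩ (by omega)
  have hhalf : ∀ p q : Fin 3, p ≠ q →
      Realizes n (fun i => if i = p then 3 * s else if i = q then 3 * s else 0) :=
    fun p q hpq => realizes_split p q hpq (key _ (by omega) (by omega)) (by omega)
  have base : ∀ {v}, Realizes n v → Realizes (2 ^ 0 * n) v := by
    intro v h; simpa using h
  induction a using Nat.twoStepInduction with
  | zero =>
    refine ⟨6 * s, ?_⟩
    convert (base (hall 0 1 (by decide))).step hn hodd (hhalf 1 2 (by decide)) using 1
    ext i
    fin_cases i <;> simp <;> ring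
  | one =>
    refine ⟨14 * s, ?_⟩
    have h0 := base (realizes_split (u := 4 * s) 1 2 (by decide)
      (key (2 * s) (by omega) (by omega)) (by omega))
    have h1 := realizes_split (u := 5 * s) 0 2 (by decide)
      (key s (by omega) (by omega)) (by omega)
    convert (h0.step hn hodd h1).step hn hodd (hhalf 0 1 (by decide)) using 1
    ext i
    fin_cases i <;> simp <;> ring
  | more a ih _ =>
    obtain ⟨t, ht⟩ := ih
    refine ⟨t + 2 ^ (a + 2) * (6 * s), ?_⟩
    convert (ht.step hn hodd (hall 2 0 (by decide))).step hn hodd (hhalf 0 1 (by decide)) using 1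
    ext i
    fin_cases i <;> simp <;> ring

/-- If `n ≠ 3` is an odd almost practical number such that `6 ∣ σ(n)`, then
`2 ^ α * n` is a `3`-layered number for every positive integer `α`. -/
theorem two_pow_mul_almostPractical_three_layered (n : ℕ) (hn : 0 < n) (hn3 : n ≠ 3)
    (hodd : Odd n) (hap : AlmostPractical n) (h6 : 6 ∣ (∑ d ∈ n.divisors, d)) :
    ∀ α : ℕ, 0 < α → IsKLayered (2 ^ α * n) 3 := by
  intro α hα
  have h18 := sum_ge n hn hn3 hodd hap h6
  obtain ⟨s, hs⟩ := h6
  obtain ⟨a, rfl⟩ : ∃ a, α = a + 1 := ⟨α - 1, by omega⟩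
  obtain ⟨t, c, hc⟩ := all_realizes n s hn hodd hap hs (by omega) a
  exact ⟨c, fun i j => by rw [hc i, hc j]⟩
end

section
/- For a positive integer n, the number n! is a 3-layered number if and only if n ≥ 5 and n ≠ 10. -/
/-! ### Part 1: three-colourings of finite sets with prescribed sums -/

/-- `TriSum S x y`: the set `S` has a 3-colouring whose first two colour sums are `x` and `y`. -/
def TriSum (S : Finset ℕ) (x y : ℕ) : Prop :=
  ∃ c : ℕ → Fin 3, ∑ d ∈ S.filter (fun d => c d = 0), d = x ∧
    ∑ d ∈ S.filter (fun d => c d = 1), d = y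

theorem TriSum.union {S T : Finset ℕ} (h : Disjoint S T) {x y x' y' : ℕ}
    (h1 : TriSum S x y) (h2 : TriSum T x' y') : TriSum (S ∪ T) (x + x') (y + y') := by
  obtain ⟨c, rfl, rfl⟩ := h1
  obtain ⟨c', rfl, rfl⟩ := h2
  have key : ∀ i : Fin 3, ∑ d ∈ (S ∪ T).filter (fun d => (if d ∈ S then c d else c' d) = i), d
      = ∑ d ∈ S.filter (fun d => c d = i), d + ∑ d ∈ T.filter (fun d => c' d = i), d := by
    intro i
    rw [Finset.filter_union, Finset.sum_union (Finset.disjoint_filter_filter h)]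
    congr 1
    · apply Finset.sum_congr _ (fun _ _ => rfl)
      apply Finset.filter_congr
      intro d hd
      simp [hd]
    · apply Finset.sum_congr _ (fun _ _ => rfl)
      apply Finset.filter_congr
      intro d hd
      have : d ∉ S := fun hS => (Finset.disjoint_left.mp h hS hd)
      simp [this]
  exact ⟨fun d => if d ∈ S then c d else c' d, key 0, key 1⟩

theorem TriSum.dilate {S : Finset ℕ} {x y : ℕ} (q : ℕ) (hq : 0 < q) (h : TriSum S x y) :
    TriSum (S.image (fun d => q * d)) (q * x) (q * y) := by
  obtain ⟨c, rfl, rfl⟩ := h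
  have key : ∀ i : Fin 3, ∑ d ∈ (S.image (fun d => q * d)).filter (fun d => c (d / q) = i), d
      = q * ∑ d ∈ S.filter (fun d => c d = i), d := by
    intro i
    rw [Finset.filter_image, Finset.sum_image, Finset.mul_sum]
    · apply Finset.sum_congr _ (fun _ _ => rfl)
      apply Finset.filter_congr
      intro d _
      simp [Nat.mul_div_cancel_left d hq]
    · intro a _ b _ hab
      exact Nat.eq_of_mul_eq_mul_left hq hab
  exact ⟨fun d => c (d / q), key 0, key 1⟩

theorem divisors_split {m q : ℕ} (hm : 0 < m) (hq : q.Prime) (hqm : ¬ q ∣ m) (j k : ℕ) :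
    Disjoint (m * q ^ j).divisors ((m * q ^ k).divisors.image (fun d => q ^ (j + 1) * d)) ∧
    (m * q ^ (j + k + 1)).divisors =
      (m * q ^ j).divisors ∪ (m * q ^ k).divisors.image (fun d => q ^ (j + 1) * d) := by
  have hq0 := hq.pos
  have hcop : Nat.Coprime q m := (Nat.Prime.coprime_iff_not_dvd hq).2 hqm
  have hno : ¬ q ^ (j + 1) ∣ m * q ^ j := by
    intro h
    have h1 : q ^ (j + 1) ∣ q ^ j := (Nat.Coprime.pow_left _ hcop).dvd_of_dvd_mul_left h
    have := (Nat.pow_dvd_pow_iff_le_right hq.one_lt).1 h1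
    omega
  constructor
  · rw [Finset.disjoint_left]
    intro d hd hd'
    simp only [Finset.mem_image, Nat.mem_divisors] at hd hd'
    obtain ⟨e, _, rfl⟩ := hd'
    exact hno ((Dvd.intro _ rfl).trans hd.1)
  · ext d
    have e1 : m * q ^ (j + k + 1) = q ^ (j + 1) * (m * q ^ k) := by ring
    simp only [Finset.mem_union, Finset.mem_image, Nat.mem_divisors]
    constructor
    · rintro ⟨h, -⟩
      by_cases hd : q ^ (j + 1) ∣ d
      · right
        obtain ⟨e, rfl⟩ := hd
        refine ⟨e, ⟨?_, by positivity⟩, rfl⟩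
        rw [e1] at h
        exact Nat.dvd_of_mul_dvd_mul_left (by positivity) h
      · left
        refine ⟨?_, by positivity⟩
        have hd0 : d ≠ 0 := by rintro rfl; simp at hd
        obtain ⟨i, e, he, rfl⟩ := Nat.exists_eq_pow_mul_and_not_dvd hd0 q hq.one_lt.ne'
        have hi : i ≤ j := by
          by_contra hc
          exact hd ((pow_dvd_pow q (by omega)).trans (Dvd.intro _ rfl))
        have he' : e ∣ m := by
          have : e ∣ m * q ^ (j + k + 1) := (Dvd.intro_left _ rfl).trans h
          exact (Nat.Coprime.pow_right _ ((Nat.Prime.coprime_iff_not_dvd hq).2 he).symm).dvd_of_dvd_mul_right this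
        rw [mul_comm]
        exact mul_dvd_mul he' (pow_dvd_pow q hi)
    · rintro (⟨h, -⟩ | ⟨e, ⟨h, -⟩, rfl⟩)
      · refine ⟨h.trans (mul_dvd_mul_left _ (pow_dvd_pow q (by omega))), by positivity⟩
      · refine ⟨?_, by positivity⟩
        rw [e1]
        exact mul_dvd_mul_left _ h

theorem part_split {m q : ℕ} (hm : 0 < m) (hq : q.Prime) (hqm : ¬ q ∣ m) (j k : ℕ)
    {x y x' y' : ℕ} (h1 : TriSum (m * q ^ j).divisors x y) (h2 : TriSum (m * q ^ k).divisors x' y') :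
    TriSum (m * q ^ (j + k + 1)).divisors (x + q ^ (j + 1) * x') (y + q ^ (j + 1) * y') := by
  obtain ⟨hd, he⟩ := divisors_split hm hq hqm j k
  rw [he]
  exact h1.union hd (h2.dilate _ (pow_pos hq.pos _))

/-- Sum of divisors. -/
def sg (n : ℕ) : ℕ := ∑ d ∈ n.divisors, d

theorem sg_split {m q : ℕ} (hm : 0 < m) (hq : q.Prime) (hqm : ¬ q ∣ m) (j k : ℕ) :
    sg (m * q ^ (j + k + 1)) = sg (m * q ^ j) + q ^ (j + 1) * sg (m * q ^ k) := by
  obtain ⟨hd, he⟩ := divisors_split hm hq hqm j k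
  unfold sg
  rw [he, Finset.sum_union hd, Finset.sum_image, Finset.mul_sum]
  intro a _ b _ hab
  exact Nat.eq_of_mul_eq_mul_left (pow_pos hq.pos _) hab

/-- The divisors of `n` split into three classes of the same sum. -/
def Good (n : ℕ) : Prop := ∃ x, 3 * x = sg n ∧ TriSum n.divisors x x

theorem sum_three (S : Finset ℕ) (c : ℕ → Fin 3) :
    ∑ d ∈ S, d = ∑ d ∈ S.filter (fun d => c d = 0), d + ∑ d ∈ S.filter (fun d => c d = 1), d
      + ∑ d ∈ S.filter (fun d => c d = 2), d := by
  rw [← Finset.sum_fiberwise S c (fun d => d), Fin.sum_univ_three]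

theorem Good.layered {n : ℕ} (h : Good n) : IsKLayered n 3 := by
  obtain ⟨x, hx, c, h0, h1⟩ := h
  have hs := sum_three n.divisors c
  unfold sg at hx
  have h2 : ∑ d ∈ n.divisors.filter (fun d => c d = 2), d = x := by omega
  have key : ∀ i : Fin 3, ∑ d ∈ n.divisors.filter (fun d => c d = i), d = x := by
    intro i
    fin_cases i
    · exact h0
    · exact h1
    · exact h2
  exact ⟨c, fun i j => (key i).trans (key j).symm⟩

theorem layered_dvd {n : ℕ} (h : IsKLayered n 3) : ∃ x, 3 * x = sg n ∧ (n ≠ 0 → n ≤ x) := by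
  obtain ⟨c, hc⟩ := h
  have hs := sum_three n.divisors c
  refine ⟨∑ d ∈ n.divisors.filter (fun d => c d = 0), d, ?_, ?_⟩
  · have h1 := hc 0 1
    have h2 := hc 0 2
    unfold sg
    omega
  · intro hn
    rw [hc 0 (c n)]
    apply Finset.single_le_sum (f := fun d => d) (fun _ _ => Nat.zero_le _)
    simp [hn]

theorem Good.split {m q : ℕ} (hm : 0 < m) (hq : q.Prime) (hqm : ¬ q ∣ m) (j k : ℕ)
    (h1 : Good (m * q ^ j)) (h2 : Good (m * q ^ k)) : Good (m * q ^ (j + k + 1)) := by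
  obtain ⟨x, hx, hp⟩ := h1
  obtain ⟨x', hx', hp'⟩ := h2
  refine ⟨x + q ^ (j + 1) * x', ?_, part_split hm hq hqm j k hp hp'⟩
  rw [sg_split hm hq hqm, ← hx, ← hx']
  ring

theorem Good.mul_pow {m q : ℕ} (hm : 0 < m) (hq : q.Prime) (hqm : ¬ q ∣ m) (h : Good m) (k : ℕ) :
    Good (m * q ^ k) := by
  induction k with
  | zero => simpa using h
  | succ k ih => exact Good.split hm hq hqm k 0 ih (by simpa using h)

theorem Good.mul_pow' {m q : ℕ} (hm : 0 < m) (hq : q.Prime) (hqm : ¬ q ∣ m)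
    (h1 : Good (m * q ^ 1)) (h2 : Good (m * q ^ 2)) (k : ℕ) :
    Good (m * q ^ (k + 1)) ∧ Good (m * q ^ (k + 2)) := by
  induction k with
  | zero => exact ⟨h1, h2⟩
  | succ k ih => exact ⟨ih.2, Good.split hm hq hqm (k + 1) 1 ih.1 h1⟩

theorem Good.mul_coprime (r : ℕ) : ∀ m, 0 < m → Nat.Coprime m r → Good m → r ≠ 0 → Good (m * r) := by
  induction r using Nat.recOnPosPrimePosCoprime with
  | zero => intro m _ _ _ h; exact absurd rfl h
  | one => intro m _ _ h _; simpa using h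
  | prime_pow p n hp hn =>
    intro m hm hc h _
    refine h.mul_pow hm hp ?_ n
    have := (Nat.coprime_pow_right_iff hn m p).1 hc
    exact (Nat.Prime.coprime_iff_not_dvd hp).1 this.symm
  | coprime a b ha hb hab iha ihb =>
    intro m hm hc h _
    rw [← mul_assoc]
    apply ihb (m * a) (by positivity) _ _ (by omega)
    · exact Nat.Coprime.mul_left (Nat.Coprime.coprime_mul_left_right hc) hab
    · exact iha m hm (Nat.Coprime.coprime_mul_right_right hc) h (by omega)

/-! ### Reachability by bit masks -/

/-- One step of the reachability computation; the case split forces evaluation of the argument. -/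
def reachStep (W d : ℕ) : ℕ → ℕ
  | 0 => 0
  | n + 1 => ((n + 1) ||| ((n + 1) <<< d)) ||| ((n + 1) <<< (W * d))

theorem reachStep_eq (W d r : ℕ) : reachStep W d r = (r ||| (r <<< d)) ||| (r <<< (W * d)) := by
  cases r with
  | zero => simp [reachStep]
  | succ n => rfl

/-- Bit `x + W * y` of `reach W l` is set when `l` has a colouring with sums `x`, `y`. -/
def reach (W : ℕ) : List ℕ → ℕ
  | [] => 1
  | d :: l => reachStep W d (reach W l)

theorem reach_sound (W : ℕ) (l : List ℕ) (hl : l.Nodup) : ∀ j, (reach W l).testBit j = true →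
    ∃ x y, j = x + W * y ∧ TriSum l.toFinset x y := by
  induction l with
  | nil =>
    intro j hj
    have : j = 0 := by
      by_contra h
      rw [reach] at hj
      exact h (Nat.testBit_one_eq_true_iff_self_eq_zero.1 hj)
    exact ⟨0, 0, by simp [this], fun _ => 0, by simp, by simp⟩
  | cons d l ih =>
    intro j hj
    have hdl : d ∉ l := (List.nodup_cons.1 hl).1
    have ih := ih (List.nodup_cons.1 hl).2
    have hdis : Disjoint ({d} : Finset ℕ) l.toFinset := by simpa using hdl
    rw [List.toFinset_cons, Finset.insert_eq]
    rw [reach, reachStep_eq, Nat.testBit_or, Nat.testBit_or, Nat.testBit_shiftLeft, Nat.testBit_shiftLeft] at hj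
    simp only [Bool.or_eq_true, Bool.and_eq_true, decide_eq_true_eq] at hj
    rcases hj with (hj | ⟨hd, hj⟩) | ⟨hd, hj⟩
    · obtain ⟨x, y, rfl, hp⟩ := ih _ hj
      have h2 : TriSum {d} 0 0 := ⟨fun _ => 2, by simp, by simp⟩
      exact ⟨0 + x, 0 + y, by ring, h2.union hdis hp⟩
    · obtain ⟨x, y, he, hp⟩ := ih _ hj
      have h2 : TriSum {d} d 0 := ⟨fun _ => 0, by simp, by simp⟩
      exact ⟨d + x, 0 + y, by simp only [Nat.zero_add]; omega, h2.union hdis hp⟩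
    · obtain ⟨x, y, he, hp⟩ := ih _ hj
      have h2 : TriSum {d} 0 d := ⟨fun _ => 1, by simp, by simp⟩
      refine ⟨0 + x, d + y, ?_, h2.union hdis hp⟩
      rw [mul_add]; omega

theorem TriSum.le {S : Finset ℕ} {x y : ℕ} (h : TriSum S x y) : x ≤ ∑ d ∈ S, d := by
  obtain ⟨c, rfl, rfl⟩ := h
  have := sum_three S c
  omega

theorem reach_part (N : ℕ) (l : List ℕ) (W : ℕ) (hl : l.Nodup) (hN : N.divisors = l.toFinset)
    (hW : sg N < W) {x y : ℕ} (hx : x < W) (h : (reach W l).testBit (x + W * y) = true) :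
    TriSum N.divisors x y := by
  obtain ⟨x', y', he, hp⟩ := reach_sound W l hl _ h
  rw [hN]
  have h1 := hp.le
  rw [← hN] at h1
  have hx' : x' < W := lt_of_le_of_lt h1 hW
  have e1 : x = x' := by
    have := congrArg (· % W) he
    simpa [Nat.add_mul_mod_self_left, Nat.mod_eq_of_lt hx, Nat.mod_eq_of_lt hx'] using this
  subst e1
  have e2 : y = y' := Nat.eq_of_mul_eq_mul_left (show 0 < W by omega) (by omega)
  subst e2
  exact hp

/-- Mask of a window. -/
def maskW (W x0 len y0 : ℕ) : ℕ → ℕ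
  | 0 => 0
  | k + 1 => maskW W x0 len y0 k ||| ((2 ^ len - 1) <<< (x0 + W * (y0 + k)))

theorem maskW_testBit (W x0 len y0 k : ℕ) (i j : ℕ) (hi : i < len) (hj : j < k) :
    (maskW W x0 len y0 k).testBit (x0 + i + W * (y0 + j)) = true := by
  induction k with
  | zero => omega
  | succ k ih =>
    rw [maskW, Nat.testBit_or, Bool.or_eq_true]
    rcases Nat.lt_succ_iff_lt_or_eq.1 hj with h | rfl
    · exact Or.inl (ih h)
    · right
      rw [Nat.testBit_shiftLeft, Nat.testBit_two_pow_sub_one]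
      simp only [Bool.and_eq_true, decide_eq_true_eq]
      omega

theorem window_part (N : ℕ) (l : List ℕ) (W x0 len y0 k : ℕ) (hl : l.Nodup)
    (hN : N.divisors = l.toFinset) (hW : sg N < W)
    (hm : maskW W x0 len y0 k &&& reach W l = maskW W x0 len y0 k)
    (hW2 : x0 + len ≤ W) (x y : ℕ)
    (hx : x0 ≤ x ∧ x < x0 + len) (hy : y0 ≤ y ∧ y < y0 + k) : TriSum N.divisors x y := by
  apply reach_part N l W hl hN hW (by omega)
  have h := maskW_testBit W x0 len y0 k (x - x0) (y - y0) (by omega) (by omega)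
  rw [show x0 + (x - x0) = x by omega, show y0 + (y - y0) = y by omega, ← hm, Nat.testBit_and,
    Bool.and_eq_true] at h
  exact h.2

/-! ### Flexible numbers -/

/-- All almost balanced pairs are colour sums. -/
def Flex (c a G : ℕ) : Prop := ∀ x y : ℕ,
  3 * x ≤ sg (c * 2 ^ a) + (G + 8 * 2 ^ a) → sg (c * 2 ^ a) ≤ 3 * x + (G + 8 * 2 ^ a) →
  3 * y ≤ sg (c * 2 ^ a) + (G + 8 * 2 ^ a) → sg (c * 2 ^ a) ≤ 3 * y + (G + 8 * 2 ^ a) →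
  TriSum (c * 2 ^ a).divisors x y

/-- Each parity pattern is attained by a nearly balanced colouring of the odd divisors. -/
def Parity (c G : ℕ) : Prop := ∀ i < 2, ∀ j < 2, ∃ u v, u % 2 = i ∧ v % 2 = j ∧
  3 * u ≤ sg c + G ∧ sg c ≤ 3 * u + G ∧ 3 * v ≤ sg c + G ∧ sg c ≤ 3 * v + G ∧
  TriSum c.divisors u v

theorem flex_step {c a G : ℕ} (hc : 0 < c) (hodd : ¬ 2 ∣ c) (hp : Parity c G)
    (hs : G + 8 * 2 ^ a ≤ sg (c * 2 ^ a)) (h : Flex c a G) : Flex c (a + 1) G := by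
  intro x y h1 h2 h3 h4
  have hsum := sg_split hc Nat.prime_two hodd 0 a
  simp only [zero_add, pow_zero, mul_one, pow_one] at hsum
  obtain ⟨u, v, hu, hv, u1, u2, v1, v2, hpart⟩ := hp (x % 2) (Nat.mod_lt _ (by norm_num)) (y % 2)
    (Nat.mod_lt _ (by norm_num))
  rw [hsum, pow_succ] at h1 h2 h3 h4
  have key := h ((x - u) / 2) ((y - v) / 2) (by omega) (by omega) (by omega) (by omega)
  have := part_split hc Nat.prime_two hodd 0 a (by simpa using hpart) key
  simp only [zero_add, pow_one] at this
  rwa [show u + 2 * ((x - u) / 2) = x by omega, show v + 2 * ((y - v) / 2) = y by omega] at this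

theorem sg_two_pow {c : ℕ} (hc : 0 < c) (hodd : ¬ 2 ∣ c) (a : ℕ) :
    sg (c * 2 ^ a) + sg c = 2 * (sg c * 2 ^ a) := by
  induction a with
  | zero => simp; ring
  | succ a ih =>
    have hsum := sg_split hc Nat.prime_two hodd 0 a
    simp only [zero_add, pow_zero, mul_one, pow_one] at hsum
    rw [hsum, pow_succ]
    have : sg c * (2 ^ a * 2) = 2 * (sg c * 2 ^ a) := by ring
    omega

theorem flex_all {c a0 G : ℕ} (hc : 0 < c) (hodd : ¬ 2 ∣ c) (hp : Parity c G) (ha0 : 2 ≤ a0)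
    (hG : G ≤ 2 * sg c) (hc' : 24 ≤ sg c)
    (h0 : Flex c a0 G) (a : ℕ) (ha : a0 ≤ a) : Flex c a G := by
  induction a, ha using Nat.le_induction with
  | base => exact h0
  | succ a ha ih =>
    refine flex_step hc hodd hp ?_ ih
    have := sg_two_pow hc hodd a
    have h4 : 4 ≤ 2 ^ a := by
      calc 4 = 2 ^ 2 := by norm_num
        _ ≤ 2 ^ a := Nat.pow_le_pow_right (by norm_num) (by omega)
    nlinarith

theorem flex_good {c a G : ℕ} (h : Flex c a G) (h3 : 3 ∣ sg (c * 2 ^ a)) : Good (c * 2 ^ a) := by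
  obtain ⟨x, hx⟩ := h3
  exact ⟨x, hx.symm, h x x (by omega) (by omega) (by omega) (by omega)⟩

theorem flex_good_mul {c a G p : ℕ} (hc : 0 < c) (h : Flex c a G) (hp : p.Prime) (hp3 : p % 3 = 2)
    (hpc : ¬ p ∣ c * 2 ^ a) (hpa : p ≤ 4 * 2 ^ a) (hs : 2 * p ≤ sg (c * 2 ^ a)) :
    Good ((c * 2 ^ a) * p) := by
  have hm : 0 < c * 2 ^ a := by positivity
  unfold Flex at h
  have hg : 3 ∣ sg (c * 2 ^ a) → Good (c * 2 ^ a) := flex_good h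
  obtain ⟨m, hmdef⟩ : ∃ m, m = c * 2 ^ a := ⟨_, rfl⟩
  obtain ⟨s, hsdef⟩ : ∃ s, s = sg m := ⟨_, rfl⟩
  rw [← hmdef] at hm hg hpc hs ⊢
  simp only [← hmdef] at h
  rw [← hsdef] at hg hs
  simp only [← hsdef] at h
  have hsum := sg_split hm hp hpc 0 0
  simp only [zero_add, pow_zero, mul_one, pow_one] at hsum
  rw [← hsdef] at hsum
  by_cases h3 : 3 ∣ s
  · have := Good.mul_pow hm hp hpc (hg h3) 1
    simpa using this
  have hp1 := hp.one_lt
  obtain ⟨t, ht⟩ : ∃ t, p = 3 * t + 2 := ⟨p / 3, by omega⟩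
  have fin : ∀ x y x' y' : ℕ, TriSum m.divisors x y → TriSum m.divisors x' y' →
      3 * (x + p * x') = s + p * s → 3 * (y + p * y') = s + p * s → Good (m * p) := by
    intro x y x' y' h1 h2 e1 e2
    have := part_split hm hp hpc 0 0 (by simpa using h1) (by simpa using h2)
    simp only [zero_add, pow_one] at this
    refine ⟨x + p * x', by rw [hsum, e1], ?_⟩
    have e : y + p * y' = x + p * x' := by omega
    rwa [e] at this
  rcases (show s % 3 = 1 ∨ s % 3 = 2 by omega) with hs3 | hs3
  · obtain ⟨k, hk⟩ : ∃ k, s = 3 * k + 1 := ⟨s / 3, by omega⟩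
    refine fin (k - 2 * t - 1) (k + t + 1) (k + 1) k (h _ _ ?_ ?_ ?_ ?_) (h _ _ ?_ ?_ ?_ ?_) ?_ ?_
    all_goals first
      | omega
      | (have hle : 2 * t + 1 ≤ k := by omega
         zify [hle]
         rw [Nat.sub_sub]
         zify [hle]
         rw [hk, ht]; push_cast; ring)
      | (rw [hk, ht]; ring)
  · obtain ⟨k, hk⟩ : ∃ k, s = 3 * k + 2 := ⟨s / 3, by omega⟩
    refine fin (k + 2 * t + 2) (k - t) k (k + 1) (h _ _ ?_ ?_ ?_ ?_) (h _ _ ?_ ?_ ?_ ?_) ?_ ?_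
    all_goals first
      | omega
      | (have hle : t ≤ k := by omega
         zify [hle]
         rw [hk, ht]; push_cast; ring)

/-! ### The four base cases -/

theorem sg_15 : sg 15 = 24 := by decide +kernel

theorem sg_120 : sg 120 = 360 := by decide +kernel

theorem parity_15 : Parity 15 24 := by
  have h : ∀ u v : ℕ, u < 25 → (reach 25 [1, 3, 5, 15]).testBit (u + 25 * v) = true →
      TriSum (Nat.divisors 15) u v := fun u v hu h =>
    reach_part 15 [1, 3, 5, 15] 25 (by decide) (by decide +kernel) (by rw [sg_15]; norm_num) hu h
  intro i hi j hj
  rw [sg_15]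
  interval_cases i <;> interval_cases j
  · exact ⟨4, 0, by norm_num, by norm_num, by norm_num, by norm_num, by norm_num, by norm_num,
      h _ _ (by norm_num) (by decide +kernel)⟩
  · exact ⟨4, 5, by norm_num, by norm_num, by norm_num, by norm_num, by norm_num, by norm_num,
      h _ _ (by norm_num) (by decide +kernel)⟩
  · exact ⟨5, 4, by norm_num, by norm_num, by norm_num, by norm_num, by norm_num, by norm_num,
      h _ _ (by norm_num) (by decide +kernel)⟩
  · exact ⟨3, 5, by norm_num, by norm_num, by norm_num, by norm_num, by norm_num, by norm_num,
      h _ _ (by norm_num) (by decide +kernel)⟩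

theorem flex_15 (a : ℕ) (ha : 3 ≤ a) : Flex 15 a 24 := by
  refine flex_all (by norm_num) (by norm_num) parity_15 (by norm_num) (by rw [sg_15]; norm_num)
    (by rw [sg_15]) ?_ a ha
  intro x y
  rw [show 15 * 2 ^ 3 = 120 by norm_num, sg_120]
  intro h1 h2 h3 h4
  exact window_part 120 [1, 2, 3, 4, 5, 6, 8, 10, 12, 15, 20, 24, 30, 40, 60, 120]
    361 91 59 91 59 (by decide) (by decide +kernel) (by rw [sg_120]; norm_num) (by decide +kernel) (by norm_num) x y
    (by omega) (by omega)

theorem sg_45 : sg 45 = 78 := by decide +kernel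

theorem sg_180 : sg 180 = 546 := by decide +kernel

theorem parity_45 : Parity 45 36 := by
  have h : ∀ u v : ℕ, u < 79 → (reach 79 [1, 3, 5, 9, 15, 45]).testBit (u + 79 * v) = true →
      TriSum (Nat.divisors 45) u v := fun u v hu h =>
    reach_part 45 [1, 3, 5, 9, 15, 45] 79 (by decide) (by decide +kernel) (by rw [sg_45]; norm_num) hu h
  intro i hi j hj
  rw [sg_45]
  interval_cases i <;> interval_cases j
  · exact ⟨16, 14, by norm_num, by norm_num, by norm_num, by norm_num, by norm_num, by norm_num,
      h _ _ (by norm_num) (by decide +kernel)⟩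
  · exact ⟨16, 17, by norm_num, by norm_num, by norm_num, by norm_num, by norm_num, by norm_num,
      h _ _ (by norm_num) (by decide +kernel)⟩
  · exact ⟨17, 16, by norm_num, by norm_num, by norm_num, by norm_num, by norm_num, by norm_num,
      h _ _ (by norm_num) (by decide +kernel)⟩
  · exact ⟨15, 15, by norm_num, by norm_num, by norm_num, by norm_num, by norm_num, by norm_num,
      h _ _ (by norm_num) (by decide +kernel)⟩

theorem flex_45 (a : ℕ) (ha : 2 ≤ a) : Flex 45 a 36 := by
  refine flex_all (by norm_num) (by norm_num) parity_45 (by norm_num) (by rw [sg_45]; norm_num)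
    (by rw [sg_45]; norm_num) ?_ a ha
  intro x y
  rw [show 45 * 2 ^ 2 = 180 by norm_num, sg_180]
  intro h1 h2 h3 h4
  exact window_part 180 [1, 2, 3, 4, 5, 6, 9, 10, 12, 15, 18, 20, 30, 36, 45, 60, 90, 180]
    547 160 45 160 45 (by decide) (by decide +kernel) (by rw [sg_180]; norm_num) (by decide +kernel) (by norm_num) x y
    (by omega) (by omega)

theorem sg_75 : sg 75 = 124 := by decide +kernel

theorem sg_600 : sg 600 = 1860 := by decide +kernel

theorem parity_75 : Parity 75 64 := by
  have h : ∀ u v : ℕ, u < 125 → (reach 125 [1, 3, 5, 15, 25, 75]).testBit (u + 125 * v) = true →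
      TriSum (Nat.divisors 75) u v := fun u v hu h =>
    reach_part 75 [1, 3, 5, 15, 25, 75] 125 (by decide) (by decide +kernel) (by rw [sg_75]; norm_num) hu h
  intro i hi j hj
  rw [sg_75]
  interval_cases i <;> interval_cases j
  · exact ⟨26, 20, by norm_num, by norm_num, by norm_num, by norm_num, by norm_num, by norm_num,
      h _ _ (by norm_num) (by decide +kernel)⟩
  · exact ⟨24, 25, by norm_num, by norm_num, by norm_num, by norm_num, by norm_num, by norm_num,
      h _ _ (by norm_num) (by decide +kernel)⟩
  · exact ⟨25, 24, by norm_num, by norm_num, by norm_num, by norm_num, by norm_num, by norm_num,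
      h _ _ (by norm_num) (by decide +kernel)⟩
  · exact ⟨23, 25, by norm_num, by norm_num, by norm_num, by norm_num, by norm_num, by norm_num,
      h _ _ (by norm_num) (by decide +kernel)⟩

theorem flex_75 (a : ℕ) (ha : 3 ≤ a) : Flex 75 a 64 := by
  refine flex_all (by norm_num) (by norm_num) parity_75 (by norm_num) (by rw [sg_75]; norm_num)
    (by rw [sg_75]; norm_num) ?_ a ha
  intro x y
  rw [show 75 * 2 ^ 3 = 600 by norm_num, sg_600]
  intro h1 h2 h3 h4
  exact window_part 600 [1, 2, 3, 4, 5, 6, 8, 10, 12, 15, 20, 24, 25, 30, 40, 50, 60, 75, 100, 120, 150, 200, 300, 600]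
    1861 578 85 578 85 (by decide) (by decide +kernel) (by rw [sg_600]; norm_num) (by decide +kernel) (by norm_num) x y
    (by omega) (by omega)

theorem sg_225 : sg 225 = 403 := by decide +kernel

theorem sg_900 : sg 900 = 2821 := by decide +kernel

theorem parity_225 : Parity 225 139 := by
  have h : ∀ u v : ℕ, u < 404 → (reach 404 [1, 3, 5, 9, 15, 25, 45, 75, 225]).testBit (u + 404 * v) = true →
      TriSum (Nat.divisors 225) u v := fun u v hu h =>
    reach_part 225 [1, 3, 5, 9, 15, 25, 45, 75, 225] 404 (by decide) (by decide +kernel) (by rw [sg_225]; norm_num) hu h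
  intro i hi j hj
  rw [sg_225]
  interval_cases i <;> interval_cases j
  · exact ⟨88, 90, by norm_num, by norm_num, by norm_num, by norm_num, by norm_num, by norm_num,
      h _ _ (by norm_num) (by decide +kernel)⟩
  · exact ⟨88, 89, by norm_num, by norm_num, by norm_num, by norm_num, by norm_num, by norm_num,
      h _ _ (by norm_num) (by decide +kernel)⟩
  · exact ⟨89, 88, by norm_num, by norm_num, by norm_num, by norm_num, by norm_num, by norm_num,
      h _ _ (by norm_num) (by decide +kernel)⟩
  · exact ⟨89, 89, by norm_num, by norm_num, by norm_num, by norm_num, by norm_num, by norm_num,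
      h _ _ (by norm_num) (by decide +kernel)⟩

theorem flex_225 (a : ℕ) (ha : 2 ≤ a) : Flex 225 a 139 := by
  refine flex_all (by norm_num) (by norm_num) parity_225 (by norm_num) (by rw [sg_225]; norm_num)
    (by rw [sg_225]; norm_num) ?_ a ha
  intro x y
  rw [show 225 * 2 ^ 2 = 900 by norm_num, sg_900]
  intro h1 h2 h3 h4
  exact window_part 900 [1, 2, 3, 4, 5, 6, 9, 10, 12, 15, 18, 20, 25, 30, 36, 45, 50, 60, 75, 90, 100, 150, 180, 225, 300, 450, 900]
    2822 884 114 884 114 (by decide) (by decide +kernel) (by rw [sg_900]; norm_num) (by decide +kernel) (by norm_num) x y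
    (by omega) (by omega)

/-! ### Part 2: primes congruent to 2 modulo 3 in `(m, 2m]` -/

/-- The nontrivial character modulo 3. -/
def chi (k : ℕ) : ℝ := if k % 3 = 1 then 1 else if k % 3 = 2 then -1 else 0

theorem chi_mul (a b : ℕ) : chi (a * b) = chi a * chi b := by
  have h : (a * b) % 3 = ((a % 3) * (b % 3)) % 3 := Nat.mul_mod a b 3
  unfold chi
  rw [h]
  have ha : a % 3 < 3 := Nat.mod_lt _ (by norm_num)
  have hb : b % 3 < 3 := Nat.mod_lt _ (by norm_num)
  generalize a % 3 = a' at *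
  generalize b % 3 = b' at *
  interval_cases a' <;> interval_cases b' <;> norm_num

theorem neg_one_le_chi (k : ℕ) : -1 ≤ chi k := by
  unfold chi
  split_ifs <;> norm_num

theorem sum_chi (N : ℕ) : ∑ k ∈ Finset.Ioc 0 N, chi k = if N % 3 = 1 then 1 else 0 := by
  induction N with
  | zero => simp
  | succ N ih =>
    rw [Finset.sum_Ioc_succ_top (Nat.zero_le _), ih]
    unfold chi
    rcases (show N % 3 = 0 ∨ N % 3 = 1 ∨ N % 3 = 2 by omega) with h | h | h
    · have : (N + 1) % 3 = 1 := by omega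
      simp [h, this]
    · have : (N + 1) % 3 = 2 := by omega
      simp [h, this]
    · have : (N + 1) % 3 = 0 := by omega
      simp [h, this]

/-- `χ Λ` -/
noncomputable def chiLam : ArithmeticFunction ℝ :=
  ⟨fun d => chi d * ArithmeticFunction.vonMangoldt d, by simp⟩

/-- `χ` as an arithmetic function. -/
noncomputable def chiA : ArithmeticFunction ℝ := ⟨chi, by simp [chi]⟩

theorem chiLam_mul_chi (n : ℕ) : (chiLam * chiA) n = chi n * Real.log n := by
  rw [ArithmeticFunction.mul_apply, ← ArithmeticFunction.vonMangoldt_sum, Finset.mul_sum]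
  have e := Nat.sum_divisorsAntidiagonal (n := n)
    (fun i _ => chi n * ArithmeticFunction.vonMangoldt i)
  rw [← e]
  apply Finset.sum_congr rfl
  intro x hx
  have := (Nat.mem_divisorsAntidiagonal.1 hx).1
  rw [← this, chi_mul]
  simp only [chiLam, chiA, ArithmeticFunction.coe_mk]
  ring

theorem sum_chi_log (n : ℕ) : ∑ k ∈ Finset.Ioc 0 n, chi k * Real.log k =
    ∑ d ∈ Finset.Ioc 0 n, chi d * ArithmeticFunction.vonMangoldt d *
      (if (n / d) % 3 = 1 then 1 else 0) := by
  have h := ArithmeticFunction.sum_Ioc_mul_eq_sum_sum chiLam chiA n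
  simp only [chiLam_mul_chi] at h
  rw [h]
  apply Finset.sum_congr rfl
  intro d _
  rw [← sum_chi]
  rfl

theorem sum_chi_log_three (t : ℕ) : ∑ k ∈ Finset.Ioc 0 (3 * t), chi k * Real.log k ≤ 0 := by
  induction t with
  | zero => simp
  | succ t ih =>
    rw [show 3 * (t + 1) = 3 * t + 1 + 1 + 1 by ring, Finset.sum_Ioc_succ_top (Nat.zero_le _),
      Finset.sum_Ioc_succ_top (Nat.zero_le _), Finset.sum_Ioc_succ_top (Nat.zero_le _)]
    have h1 : chi (3 * t + 1) = 1 := by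
      have : (3 * t + 1) % 3 = 1 := by omega
      simp [chi, this]
    have h2 : chi (3 * t + 1 + 1) = -1 := by
      have : (3 * t + 1 + 1) % 3 = 2 := by omega
      simp [chi, this]
    have h3 : chi (3 * t + 1 + 1 + 1) = 0 := by
      have : (3 * t + 1 + 1 + 1) % 3 = 0 := by omega
      simp [chi, this]
    rw [h1, h2, h3]
    have : Real.log ((3 * t + 1 : ℕ) : ℝ) ≤ Real.log ((3 * t + 1 + 1 : ℕ) : ℝ) := by
      apply Real.log_le_log
      · positivity
      · push_cast; linarith
    linarith

theorem sum_chi_log_le (n : ℕ) (hn : 1 ≤ n) :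
    ∑ k ∈ Finset.Ioc 0 n, chi k * Real.log k ≤ Real.log n := by
  have hlog : 0 ≤ Real.log (n : ℝ) := Real.log_nonneg (by exact_mod_cast hn)
  obtain ⟨t, ht⟩ : ∃ t, n = 3 * t ∨ n = 3 * t + 1 ∨ n = 3 * t + 1 + 1 := ⟨n / 3, by omega⟩
  have h0 := sum_chi_log_three t
  have h1 : chi (3 * t + 1) = 1 := by
    have : (3 * t + 1) % 3 = 1 := by omega
    simp [chi, this]
  have h2 : chi (3 * t + 1 + 1) = -1 := by
    have : (3 * t + 1 + 1) % 3 = 2 := by omega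
    simp [chi, this]
  rcases ht with rfl | rfl | rfl
  · linarith
  · rw [Finset.sum_Ioc_succ_top (Nat.zero_le _), h1]
    linarith
  · rw [Finset.sum_Ioc_succ_top (Nat.zero_le _), Finset.sum_Ioc_succ_top (Nat.zero_le _), h1, h2]
    have : Real.log ((3 * t + 1 : ℕ) : ℝ) ≤ Real.log ((3 * t + 1 + 1 : ℕ) : ℝ) := by
      apply Real.log_le_log
      · positivity
      · push_cast; linarith
    linarith

theorem log_fact (n : ℕ) : Real.log (n.factorial : ℝ) =
    ∑ d ∈ Finset.Ioc 0 n, ArithmeticFunction.vonMangoldt d * ((n / d : ℕ) : ℝ) := by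
  rw [← ArithmeticFunction.sum_Ioc_mul_zeta_eq_sum, ArithmeticFunction.vonMangoldt_mul_zeta]
  induction n with
  | zero => simp
  | succ n ih =>
    rw [Finset.sum_Ioc_succ_top (Nat.zero_le _), ← ih, Nat.factorial_succ, Nat.cast_mul,
      Real.log_mul (by positivity) (by positivity), ArithmeticFunction.log_apply, add_comm]

theorem log_fact' (n M : ℕ) (h : n ≤ M) : Real.log (n.factorial : ℝ) =
    ∑ d ∈ Finset.Ioc 0 M, ArithmeticFunction.vonMangoldt d * ((n / d : ℕ) : ℝ) := by
  rw [log_fact]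
  apply Finset.sum_subset
  · exact Finset.Ioc_subset_Ioc_right h
  · intro d hd hd'
    simp only [Finset.mem_Ioc] at hd hd'
    rw [Nat.div_eq_of_lt (by omega)]
    simp

theorem sum_odd (n : ℕ) : ∑ d ∈ Finset.Ioc 0 n, ArithmeticFunction.vonMangoldt d *
      (((n / d) % 2 : ℕ) : ℝ) =
    Real.log (n.factorial : ℝ) - 2 * Real.log ((n / 2).factorial : ℝ) := by
  rw [log_fact n, log_fact' (n / 2) n (Nat.div_le_self _ _), Finset.mul_sum,
    ← Finset.sum_sub_distrib]
  apply Finset.sum_congr rfl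
  intro d _
  have h1 : n / 2 / d = (n / d) / 2 := by
    rw [Nat.div_div_eq_div_mul, Nat.div_div_eq_div_mul, mul_comm]
  have h2 : (((n / d) % 2 : ℕ) : ℝ) + 2 * ((n / d / 2 : ℕ) : ℝ) = ((n / d : ℕ) : ℝ) := by
    exact_mod_cast Nat.mod_add_div (n / d) 2
  rw [h1, ← h2]
  ring

theorem fact_upper (N : ℕ) (hN : 1 ≤ N) :
    Real.log (N.factorial : ℝ) - 2 * Real.log ((N / 2).factorial : ℝ) ≤
      N * Real.log 2 + Real.log N := by
  have h : N.factorial ≤ 2 ^ N * N * ((N / 2).factorial * (N / 2).factorial) := by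
    have h1 := Nat.choose_mul_factorial_mul_factorial (Nat.div_le_self N 2)
    have h2 : N.choose (N / 2) ≤ 2 ^ N := Nat.choose_le_two_pow _ _
    have h3 : (N - N / 2).factorial ≤ N * (N / 2).factorial := by
      rcases Nat.even_or_odd' N with ⟨k, rfl | rfl⟩
      · rw [show 2 * k - 2 * k / 2 = k by omega, show 2 * k / 2 = k by omega]
        exact Nat.le_mul_of_pos_left _ (by omega)
      · rw [show 2 * k + 1 - (2 * k + 1) / 2 = k + 1 by omega, show (2 * k + 1) / 2 = k by omega,
          Nat.factorial_succ]
        exact Nat.mul_le_mul_right _ (by omega)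
    calc N.factorial = N.choose (N / 2) * (N / 2).factorial * (N - N / 2).factorial := h1.symm
      _ ≤ 2 ^ N * (N / 2).factorial * (N * (N / 2).factorial) := by gcongr
      _ = _ := by ring
  have hN' : (0 : ℝ) < N := by exact_mod_cast hN
  have hf : (0 : ℝ) < ((N / 2).factorial : ℝ) := by exact_mod_cast Nat.factorial_pos _
  have h' : (N.factorial : ℝ) ≤ 2 ^ N * N * (((N / 2).factorial : ℝ) * ((N / 2).factorial : ℝ)) := by
    exact_mod_cast h
  have := Real.log_le_log (by exact_mod_cast Nat.factorial_pos N) h'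
  rw [Real.log_mul (by positivity) (by positivity), Real.log_mul (by positivity) (by positivity),
    Real.log_mul (by positivity) (by positivity), Real.log_pow] at this
  linarith

theorem fact_lower (m : ℕ) (hm : 4 ≤ m) : m * Real.log 4 - Real.log m ≤
    Real.log ((2 * m).factorial : ℝ) - 2 * Real.log ((2 * m / 2).factorial : ℝ) := by
  rw [show 2 * m / 2 = m by omega]
  have h1 := Nat.four_pow_lt_mul_centralBinom m hm
  have h2 : m.centralBinom * m.factorial * m.factorial = (2 * m).factorial := by
    have := Nat.choose_mul_factorial_mul_factorial (show m ≤ 2 * m by omega)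
    rwa [show 2 * m - m = m by omega] at this
  have hf : (0 : ℝ) < (m.factorial : ℝ) := by exact_mod_cast Nat.factorial_pos _
  have hm' : (0 : ℝ) < m := by exact_mod_cast (by omega : 0 < m)
  have h1' : (4 : ℝ) ^ m ≤ m * m.centralBinom := by exact_mod_cast h1.le
  have hc : (0 : ℝ) < m.centralBinom := by exact_mod_cast Nat.centralBinom_pos m
  have := Real.log_le_log (by positivity) h1'
  rw [Real.log_mul (by positivity) (by positivity), Real.log_pow] at this
  rw [← h2]
  push_cast
  rw [Real.log_mul (by positivity) (by positivity), Real.log_mul (by positivity) (by positivity)]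
  linarith

theorem psi_nat (N M : ℕ) (h : N ≤ M) : Chebyshev.psi (N : ℝ) =
    ∑ d ∈ Finset.Ioc 0 M, ArithmeticFunction.vonMangoldt d * (if d ≤ N then 1 else 0) := by
  rw [Chebyshev.psi, Nat.floor_natCast]
  simp only [mul_ite, mul_one, mul_zero]
  rw [← Finset.sum_filter]
  apply Finset.sum_congr _ (fun _ _ => rfl)
  ext d
  simp only [Finset.mem_Ioc, Finset.mem_filter]
  omega

theorem main_ineq (m : ℕ) (hm : 20 ≤ m)
    (hno : ∀ p, p.Prime → m < p → p ≤ 2 * m → p % 3 ≠ 2) :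
    m * Real.log 4 - Real.log m ≤ Real.log ((2 * m : ℕ) : ℝ)
      + (((2 * m / 3 : ℕ) : ℝ) * Real.log 2 + Real.log ((2 * m / 3 : ℕ) : ℝ))
      + 2 * Chebyshev.psi ((2 * m / 7 : ℕ) : ℝ)
      + 2 * (Chebyshev.psi ((2 * m : ℕ) : ℝ) - Chebyshev.theta ((2 * m : ℕ) : ℝ)) := by
  refine (fact_lower m (by omega)).trans ?_
  have hA := sum_chi_log_le (2 * m) (by omega)
  have hB := fact_upper (2 * m / 3) (by omega)
  have hN : 2 * m / 3 ≤ 2 * m := Nat.div_le_self _ _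
  have hB' : ∑ d ∈ Finset.Ioc 0 (2 * m), ArithmeticFunction.vonMangoldt d *
      (((2 * m / 3 / d) % 2 : ℕ) : ℝ) =
      Real.log ((2 * m / 3).factorial : ℝ) - 2 * Real.log ((2 * m / 3 / 2).factorial : ℝ) := by
    rw [← sum_odd]
    symm
    apply Finset.sum_subset
    · exact Finset.Ioc_subset_Ioc_right hN
    · intro d hd hd'
      simp only [Finset.mem_Ioc] at hd hd'
      rw [Nat.div_eq_of_lt (by omega)]
      simp
  rw [← hB'] at hB
  have hC := psi_nat (2 * m / 7) (2 * m) (Nat.div_le_self _ _)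
  have hD := Chebyshev.psi_sub_theta_eq_sum_not_prime ((2 * m : ℕ) : ℝ)
  rw [Nat.floor_natCast, Finset.sum_filter] at hD
  rw [sum_chi_log] at hA
  rw [← sum_odd]
  refine le_trans ?_ (add_le_add (add_le_add (add_le_add hA hB) le_rfl) le_rfl)
  rw [hC, hD, Finset.mul_sum, Finset.mul_sum, ← Finset.sum_add_distrib, ← Finset.sum_add_distrib,
    ← Finset.sum_add_distrib]
  apply Finset.sum_le_sum
  intro d hd
  rw [Finset.mem_Ioc] at hd
  have hL : 0 ≤ ArithmeticFunction.vonMangoldt d := ArithmeticFunction.vonMangoldt_nonneg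
  have hchi := neg_one_le_chi d
  have e1 : 2 * m / 3 / d = 2 * m / d / 3 := by
    rw [Nat.div_div_eq_div_mul, Nat.div_div_eq_div_mul, mul_comm 3 d]
  have e2 : d ≤ 2 * m / 7 ↔ 7 ≤ 2 * m / d := by
    rw [Nat.le_div_iff_mul_le (by norm_num), Nat.le_div_iff_mul_le hd.1, mul_comm]
  rw [e1]
  simp only [e2]
  have hq1 : 1 ≤ 2 * m / d := (Nat.le_div_iff_mul_le hd.1).2 (by omega)
  have hq : 2 * m / d = 1 → m < d := by
    intro h
    by_contra hc
    have : 2 ≤ 2 * m / d := (Nat.le_div_iff_mul_le hd.1).2 (by omega)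
    omega
  generalize 2 * m / d = q at *
  have hP : 0 ≤ 2 * (if ¬ d.Prime then ArithmeticFunction.vonMangoldt d else 0) := by
    split_ifs <;> positivity
  by_cases h7 : 7 ≤ q
  · have h1 : ((q % 2 : ℕ) : ℝ) ≤ 1 := by exact_mod_cast (by omega : q % 2 ≤ 1)
    have h2 : (0 : ℝ) ≤ ((q / 3 % 2 : ℕ) : ℝ) := by positivity
    rw [if_pos h7]
    have h3 : -1 ≤ chi d * (if q % 3 = 1 then 1 else 0) := by
      split_ifs <;> linarith
    nlinarith [mul_le_mul_of_nonneg_left h1 hL, mul_nonneg hL h2,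
      mul_le_mul_of_nonneg_left h3 hL]
  · rw [if_neg h7]
    by_cases h1 : q = 1
    · have hmd := hq h1
      subst h1
      by_cases hpr : d.Prime
      · have hd2 := hno d hpr hmd hd.2
        have hd0 : d % 3 ≠ 0 := by
          intro h0
          have := (Nat.prime_dvd_prime_iff_eq Nat.prime_three hpr).1 (Nat.dvd_of_mod_eq_zero h0)
          omega
        have : chi d = 1 := by
          have : d % 3 = 1 := by omega
          simp [chi, this]
        rw [this]
        simp [hpr]
      · simp [hpr]
        nlinarith
    · have : 2 ≤ q := by omega
      have : q ≤ 6 := by omega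
      interval_cases q <;> norm_num at hP ⊢ <;> nlinarith

theorem large_case (m : ℕ) (hm : 2 ^ 21 ≤ m) : ∃ p, p.Prime ∧ m < p ∧ p ≤ 2 * m ∧ p % 3 = 2 := by
  by_contra hcon
  push Not at hcon
  have h := main_ineq m (by omega) (fun p h1 h2 h3 => hcon p h1 h2 h3)
  obtain ⟨n, hn⟩ : ∃ n : ℝ, n = ((2 * m : ℕ) : ℝ) := ⟨_, rfl⟩
  have hmR : (2 : ℝ) ^ 21 ≤ m := by exact_mod_cast hm
  have hmn : (m : ℝ) = n / 2 := by rw [hn]; push_cast; ring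
  have hn22 : (2 : ℝ) ^ 22 ≤ n := by linarith
  have hn0 : 0 < n := by linarith [show (0 : ℝ) < 2 ^ 22 by positivity]
  have hl2 := Real.log_two_gt_d9
  have hl2' := Real.log_two_lt_d9
  have hl4 : Real.log 4 = 2 * Real.log 2 := by
    rw [show (4 : ℝ) = 2 ^ 2 by norm_num, Real.log_pow]; norm_num
  have hlogn : 0 ≤ Real.log n := Real.log_nonneg (by linarith [show (1 : ℝ) ≤ 2 ^ 22 by norm_num])
  -- sqrt
  obtain ⟨s, hs⟩ : ∃ s : ℝ, s = √n := ⟨_, rfl⟩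
  have hss : s * s = n := by rw [hs]; exact Real.mul_self_sqrt hn0.le
  have hs0 : 2 ^ 11 ≤ s := by
    rw [hs]; apply Real.le_sqrt_of_sq_le; norm_num at hn22 ⊢; exact hn22
  have hspos : 0 < s := by linarith [show (0 : ℝ) < 2 ^ 11 by positivity]
  have hlogs : Real.log n = 2 * Real.log s := by
    rw [← hss, Real.log_mul hspos.ne' hspos.ne']; ring
  have htan : Real.log s ≤ 12 * Real.log 2 + s / 2 ^ 12 - 1 := by
    have h1 := Real.log_le_sub_one_of_pos (show 0 < s / 2 ^ 12 by positivity)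
    rw [Real.log_div hspos.ne' (by positivity), Real.log_pow] at h1
    push_cast at h1
    linarith
  -- bounds
  have b1 : Real.log (m : ℝ) ≤ Real.log n := Real.log_le_log (by linarith) (by linarith)
  have c2 : ((2 * m / 3 : ℕ) : ℝ) ≤ n / 3 := by
    rw [hn]; exact Nat.cast_div_le
  have c2' : (1 : ℝ) ≤ ((2 * m / 3 : ℕ) : ℝ) := by
    exact_mod_cast (by omega : 1 ≤ 2 * m / 3)
  have b2 : Real.log ((2 * m / 3 : ℕ) : ℝ) ≤ Real.log n :=
    Real.log_le_log (by linarith) (by linarith)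
  have c3 : ((2 * m / 7 : ℕ) : ℝ) ≤ n / 7 := by
    rw [hn]; exact Nat.cast_div_le
  have c3' : (1 : ℝ) ≤ ((2 * m / 7 : ℕ) : ℝ) := by
    exact_mod_cast (by omega : 1 ≤ 2 * m / 7)
  have b3 := Chebyshev.psi_le c3'
  have c4 : √((2 * m / 7 : ℕ) : ℝ) ≤ s / 2 := by
    apply Real.sqrt_le_iff.2
    constructor
    · positivity
    · nlinarith
  have c5 : Real.log ((2 * m / 7 : ℕ) : ℝ) ≤ Real.log n :=
    Real.log_le_log (by linarith) (by linarith)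
  have c5' : 0 ≤ Real.log ((2 * m / 7 : ℕ) : ℝ) := Real.log_nonneg c3'
  have c6 : √((2 * m / 7 : ℕ) : ℝ) * Real.log ((2 * m / 7 : ℕ) : ℝ) ≤ s / 2 * Real.log n :=
    mul_le_mul c4 c5 c5' (by positivity)
  have c7 : Real.log 4 * ((2 * m / 7 : ℕ) : ℝ) ≤ Real.log 4 * (n / 7) :=
    mul_le_mul_of_nonneg_left c3 (by linarith)
  have c8 : ((2 * m / 3 : ℕ) : ℝ) * Real.log 2 ≤ n / 3 * Real.log 2 :=
    mul_le_mul_of_nonneg_right c2 (by linarith)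
  have b4 := Chebyshev.psi_sub_theta_le (show (1 : ℝ) ≤ ((2 * m : ℕ) : ℝ) by
    exact_mod_cast (by omega : 1 ≤ 2 * m))
  rw [← hn, ← hs] at b4
  rw [← hn, hl4] at h
  rw [hl4] at c7 b3
  rw [hmn] at h b1
  have hfin : n * Real.log 2 * (2 / 21) ≤ 3 * Real.log n + 6 * (s * Real.log n) := by
    nlinarith
  have hfin2 : s * (s * Real.log 2 * (2 / 21)) ≤ s * (13 * Real.log s) := by
    have hlogs0 : 0 ≤ Real.log s := by linarith
    have : 6 * Real.log s ≤ s * Real.log s := by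
      apply mul_le_mul_of_nonneg_right _ hlogs0
      linarith [show (6 : ℝ) ≤ 2 ^ 11 by norm_num]
    rw [hlogs, ← hss] at hfin
    nlinarith
  have hfin3 := le_of_mul_le_mul_left hfin2 hspos
  norm_num at hs0
  nlinarith

theorem prime_two_mod_three (m : ℕ) (hm : 6 ≤ m) :
    ∃ p, p.Prime ∧ m < p ∧ p ≤ 2 * m ∧ p % 3 = 2 := by
  rcases le_or_gt (2 ^ 21) m with h | h
  · exact large_case m h
  have key : ∀ p : ℕ, p.Prime → p % 3 = 2 → m < p → p ≤ 2 * m →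
      ∃ p, p.Prime ∧ m < p ∧ p ≤ 2 * m ∧ p % 3 = 2 := fun p h1 h2 h3 h4 => ⟨p, h1, h3, h4, h2⟩
  by_cases h11 : m < 11
  · exact key 11 (by norm_num) (by norm_num) h11 (by omega)
  by_cases h17 : m < 17
  · exact key 17 (by norm_num) (by norm_num) h17 (by omega)
  by_cases h29 : m < 29
  · exact key 29 (by norm_num) (by norm_num) h29 (by omega)
  by_cases h53 : m < 53
  · exact key 53 (by norm_num) (by norm_num) h53 (by omega)
  by_cases h101 : m < 101
  · exact key 101 (by norm_num) (by norm_num) h101 (by omega)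
  by_cases h197 : m < 197
  · exact key 197 (by norm_num) (by norm_num) h197 (by omega)
  by_cases h389 : m < 389
  · exact key 389 (by norm_num) (by norm_num) h389 (by omega)
  by_cases h773 : m < 773
  · exact key 773 (by norm_num) (by norm_num) h773 (by omega)
  by_cases h1523 : m < 1523
  · exact key 1523 (by norm_num) (by norm_num) h1523 (by omega)
  by_cases h3041 : m < 3041
  · exact key 3041 (by norm_num) (by norm_num) h3041 (by omega)
  by_cases h6053 : m < 6053
  · exact key 6053 (by norm_num) (by norm_num) h6053 (by omega)
  by_cases h12101 : m < 12101
  · exact key 12101 (by norm_num) (by norm_num) h12101 (by omega)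
  by_cases h24197 : m < 24197
  · exact key 24197 (by norm_num) (by norm_num) h24197 (by omega)
  by_cases h48383 : m < 48383
  · exact key 48383 (by norm_num) (by norm_num) h48383 (by omega)
  by_cases h96749 : m < 96749
  · exact key 96749 (by norm_num) (by norm_num) h96749 (by omega)
  by_cases h193493 : m < 193493
  · exact key 193493 (by norm_num) (by norm_num) h193493 (by omega)
  by_cases h386963 : m < 386963
  · exact key 386963 (by norm_num) (by norm_num) h386963 (by omega)
  by_cases h773909 : m < 773909
  · exact key 773909 (by norm_num) (by norm_num) h773909 (by omega)
  by_cases h1547807 : m < 1547807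
  · exact key 1547807 (by norm_num) (by norm_num) h1547807 (by omega)
  by_cases h3095597 : m < 3095597
  · exact key 3095597 (by norm_num) (by norm_num) h3095597 (by omega)
  omega


/-! ### Part 3: assembling -/

theorem sg_14175 : sg 14175 = 30008 := by
  have h1 := sg_split (m := 225) (q := 7) (by norm_num) (by norm_num) (by norm_num) 0 0
  have h2 : sg (1575 * 9) = 121 * 31 * 8 := by
    unfold sg
    have e : (1575 * 9 : ℕ) = 175 * 81 := by norm_num
    rw [e, Nat.Coprime.sum_divisors_mul (by norm_num)]
    have a1 : ∑ d ∈ Nat.divisors 175, d = 248 := by decide +kernel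
    have a2 : ∑ d ∈ Nat.divisors 81, d = 121 := by decide +kernel
    rw [a1, a2]
  simpa using h2

theorem not_layered_ten : ¬ IsKLayered (Nat.factorial 10) 3 := by
  intro h
  obtain ⟨x, hx, -⟩ := layered_dvd h
  have h1 := sg_two_pow (c := 14175) (by norm_num) (by norm_num) 8
  rw [sg_14175] at h1
  have e : Nat.factorial 10 = 14175 * 2 ^ 8 := by decide
  rw [e] at hx
  omega

theorem sg_one' : sg 1 = 1 := by decide +kernel
theorem sg_two' : sg 2 = 3 := by decide +kernel
theorem sg_six' : sg 6 = 12 := by decide +kernel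
theorem sg_24' : sg 24 = 60 := by decide +kernel

theorem layered_forward (n : ℕ) (hn : 0 < n) (h : IsKLayered n.factorial 3) : 5 ≤ n ∧ n ≠ 10 := by
  constructor
  · by_contra hlt
    obtain ⟨x, hx, hle⟩ := layered_dvd h
    have hx' := hle (Nat.factorial_ne_zero n)
    have := sg_one'
    have := sg_two'
    have := sg_six'
    have := sg_24'
    have hn5 : n < 5 := by omega
    interval_cases n <;> simp [Nat.factorial] at hx hx' <;> omega
  · rintro rfl
    exact not_layered_ten h

theorem good_five : Good (Nat.factorial 5) := by
  have h := flex_good (flex_15 3 le_rfl) (by norm_num [sg_120])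
  simpa [Nat.factorial] using h

theorem good_six : Good (Nat.factorial 6) := by
  have h1 := sg_two_pow (c := 45) (by norm_num) (by norm_num) 4
  rw [sg_45] at h1
  have h := flex_good (flex_45 4 (by norm_num)) (by omega)
  simpa [Nat.factorial] using h

theorem good_seven : Good (Nat.factorial 7) := by
  have h := good_six.mul_pow (q := 7) (by decide) (by norm_num) (by decide) 1
  simpa [Nat.factorial] using h

theorem good_a : Good (15 * 2 ^ 7) := by
  have h1 := sg_two_pow (c := 15) (by norm_num) (by norm_num) 7
  rw [sg_15] at h1
  exact flex_good (flex_15 7 (by norm_num)) (by omega)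

theorem good_b : Good (45 * 2 ^ 7) := by
  have h1 := sg_two_pow (c := 45) (by norm_num) (by norm_num) 7
  rw [sg_45] at h1
  exact flex_good (flex_45 7 (by norm_num)) (by omega)

theorem good_eight : Good (Nat.factorial 8) := by
  have h := good_b.mul_pow (q := 7) (by norm_num) (by norm_num) (by norm_num) 1
  simpa [Nat.factorial] using h

theorem good_nine : Good (Nat.factorial 9) := by
  have h0 := (Good.mul_pow' (m := 640) (q := 3) (by norm_num) (by norm_num) (by norm_num)
    (by simpa using good_a) (by simpa using good_b) 2).2
  have h := h0.mul_pow (q := 7) (by norm_num) (by norm_num) (by norm_num) 1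
  simpa [Nat.factorial] using h

theorem prime_not_dvd_smooth {p q : ℕ} (hp : p.Prime) (hq : q.Prime) (hne : p ≠ q) (k : ℕ) :
    ¬ p ∣ q ^ k := fun h => hne ((Nat.prime_dvd_prime_iff_eq hp hq).1 (hp.dvd_of_dvd_pow h))

/-- The core: numbers `3^b 5^g 2^a p` with `b, g` positive. -/
theorem good_core {a p : ℕ} (ha : 3 ≤ a) (hp : p.Prime) (hp3 : p % 3 = 2) (hp6 : 6 ≤ p)
    (hpa : p ≤ 4 * 2 ^ a) (b g : ℕ) :
    Good (2 ^ a * p * 3 ^ (b + 1) * 5 ^ (g + 1)) := by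
  have n2 : ¬ p ∣ 2 ^ a := prime_not_dvd_smooth hp Nat.prime_two (by omega) a
  have n3 : ∀ k, ¬ p ∣ 3 ^ k := prime_not_dvd_smooth hp Nat.prime_three (by omega)
  have n5 : ∀ k, ¬ p ∣ 5 ^ k := prime_not_dvd_smooth hp Nat.prime_five (by omega)
  have ndv : ∀ i j, ¬ p ∣ 3 ^ i * 5 ^ j * 2 ^ a := by
    intro i j h
    rcases (hp.dvd_mul).1 h with h | h
    · rcases (hp.dvd_mul).1 h with h | h
      · exact n3 _ h
      · exact n5 _ h
    · exact n2 h
  have hs : ∀ c, 0 < c → ¬ 2 ∣ c → 24 ≤ sg c → 2 * p ≤ sg (c * 2 ^ a) := by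
    intro c hc hodd h24
    have h1 := sg_two_pow hc hodd a
    have h2 : 1 ≤ 2 ^ a := Nat.one_le_two_pow
    nlinarith
  have g15 : Good (15 * 2 ^ a * p) := flex_good_mul (by norm_num) (flex_15 a ha) hp hp3
    (by simpa using ndv 1 1) hpa (hs 15 (by norm_num) (by norm_num) (by rw [sg_15]))
  have g45 : Good (45 * 2 ^ a * p) := flex_good_mul (by norm_num) (flex_45 a (by omega)) hp hp3
    (by simpa using ndv 2 1) hpa (hs 45 (by norm_num) (by norm_num) (by rw [sg_45]; norm_num))
  have g75 : Good (75 * 2 ^ a * p) := flex_good_mul (by norm_num) (flex_75 a ha) hp hp3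
    (by simpa using ndv 1 2) hpa (hs 75 (by norm_num) (by norm_num) (by rw [sg_75]; norm_num))
  have g225 : Good (225 * 2 ^ a * p) := flex_good_mul (by norm_num) (flex_225 a (by omega)) hp hp3
    (by simpa using ndv 2 2) hpa (hs 225 (by norm_num) (by norm_num) (by rw [sg_225]; norm_num))
  have hp0 := hp.pos
  have m3 : ∀ j, ¬ 3 ∣ 2 ^ a * p * 5 ^ j := by
    intro j h
    rcases (Nat.prime_three.dvd_mul).1 h with h | h
    · rcases (Nat.prime_three.dvd_mul).1 h with h | h
      · exact prime_not_dvd_smooth Nat.prime_three Nat.prime_two (by norm_num) _ h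
      · have := (Nat.prime_dvd_prime_iff_eq Nat.prime_three hp).1 h
        omega
    · exact prime_not_dvd_smooth Nat.prime_three Nat.prime_five (by norm_num) _ h
  have m5 : ¬ 5 ∣ 2 ^ a * p * 3 ^ (b + 1) := by
    intro h
    rcases (Nat.prime_five.dvd_mul).1 h with h | h
    · rcases (Nat.prime_five.dvd_mul).1 h with h | h
      · exact prime_not_dvd_smooth Nat.prime_five Nat.prime_two (by norm_num) _ h
      · have := (Nat.prime_dvd_prime_iff_eq Nat.prime_five hp).1 h
        omega
    · exact prime_not_dvd_smooth Nat.prime_five Nat.prime_three (by norm_num) _ h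
  have r1 : Good (2 ^ a * p * 5 ^ 1 * 3 ^ (b + 1)) := by
    refine (Good.mul_pow' (by positivity) Nat.prime_three (m3 1) ?_ ?_ b).1
    · convert g15 using 1; ring
    · convert g45 using 1; ring
  have r2 : Good (2 ^ a * p * 5 ^ 2 * 3 ^ (b + 1)) := by
    refine (Good.mul_pow' (by positivity) Nat.prime_three (m3 2) ?_ ?_ b).1
    · convert g75 using 1; ring
    · convert g225 using 1; ring
  refine (Good.mul_pow' (by positivity) Nat.prime_five m5 ?_ ?_ g).1
  · convert r1 using 1; ring
  · convert r2 using 1; ring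

theorem exists_prime_half (n : ℕ) (hn : 11 ≤ n) :
    ∃ p, p.Prime ∧ p % 3 = 2 ∧ 6 ≤ p ∧ p ≤ n ∧ n < 2 * p := by
  rcases Nat.lt_or_ge n 12 with h | h
  · exact ⟨11, by norm_num, by norm_num, by norm_num, by omega, by omega⟩
  · obtain ⟨p, h1, h2, h3, h4⟩ := prime_two_mod_three (n / 2) (by omega)
    exact ⟨p, h1, h4, by omega, by omega, by omega⟩

theorem sq_not_dvd_factorial {n p : ℕ} (hp : p.Prime) (h2 : n < 2 * p) : ¬ p ^ 2 ∣ n.factorial := by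
  intro h
  have hle := (hp.pow_dvd_iff_le_factorization (Nat.factorial_ne_zero n)).1 h
  by_cases hpn : p ≤ n
  · obtain ⟨k, rfl⟩ := Nat.exists_eq_add_of_le hpn
    -- the product of `p+1, ..., p+k` is prime to `p`
    have e : (p + k).factorial = p * ((p - 1).factorial * (p + 1).ascFactorial k) := by
      rw [← Nat.factorial_mul_ascFactorial, ← mul_assoc, Nat.mul_factorial_pred hp.ne_zero]
    rw [e, pow_two] at h
    have h' := Nat.dvd_of_mul_dvd_mul_left hp.pos h
    rcases (hp.dvd_mul).1 h' with h' | h'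
    · have := (hp.dvd_factorial).1 h'
      have := hp.pos
      omega
    · rw [Nat.ascFactorial_eq_prod_range, hp.prime.dvd_finsetProd_iff] at h'
      obtain ⟨i, hi, hd⟩ := h'
      rw [Finset.mem_range] at hi
      have hd' : p ∣ 1 + i := by
        have : p + 1 + i = p + (1 + i) := by ring
        rw [this] at hd
        exact (Nat.dvd_add_right (dvd_refl p)).1 hd
      have := Nat.le_of_dvd (by omega) hd'
      omega
  · have : p ∣ n.factorial := dvd_trans (dvd_pow_self p (by norm_num)) h
    exact hpn ((hp.dvd_factorial).1 this)

theorem good_large (n : ℕ) (hn : 11 ≤ n) : Good n.factorial := by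
  obtain ⟨p, hp, hp3, hp6, hpn, hn2⟩ := exists_prime_half n hn
  have hf0 := Nat.factorial_ne_zero n
  have hpd : p ∣ n.factorial := (hp.dvd_factorial).2 hpn
  obtain ⟨N, hN⟩ := hpd
  have hpN : ¬ p ∣ N := by
    rintro ⟨t, rfl⟩
    exact sq_not_dvd_factorial hp hn2 ⟨t, by rw [hN]; ring⟩
  have hN0 : N ≠ 0 := by
    rintro rfl
    exact hpN (dvd_zero p)
  obtain ⟨a, r1, h2r, e1⟩ := Nat.exists_eq_pow_mul_and_not_dvd hN0 2 (by norm_num)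
  have hr1 : r1 ≠ 0 := by
    rintro rfl
    exact h2r (dvd_zero 2)
  obtain ⟨b, r2, h3r, e2⟩ := Nat.exists_eq_pow_mul_and_not_dvd hr1 3 (by norm_num)
  have hr2 : r2 ≠ 0 := by
    rintro rfl
    exact h3r (dvd_zero 3)
  obtain ⟨g, r, h5r, e3⟩ := Nat.exists_eq_pow_mul_and_not_dvd hr2 5 (by norm_num)
  have hr : r ≠ 0 := by
    rintro rfl
    exact h5r (dvd_zero 5)
  have n2r : ¬ 2 ∣ r := fun h => h2r (by rw [e2, e3]; exact (h.mul_left _).mul_left _)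
  have n3r : ¬ 3 ∣ r := fun h => h3r (by rw [e3]; exact h.mul_left _)
  have npr : ¬ p ∣ r := fun h => hpN (by rw [e1, e2, e3]; exact ((h.mul_left _).mul_left _).mul_left _)
  have hfac : n.factorial = 2 ^ a * p * 3 ^ b * 5 ^ g * r := by
    rw [hN, e1, e2, e3]; ring
  -- lower bound on the exponent of two
  have hlog : Nat.log 2 n ≤ a := by
    have hd : 2 ^ Nat.log 2 n ∣ n.factorial :=
      Nat.dvd_factorial (by positivity) (Nat.pow_log_le_self 2 (by omega))
    have e : n.factorial = 2 ^ a * (p * r1) := by rw [hN, e1]; ring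
    have n2 : ¬ 2 ∣ p * r1 := by
      intro h
      rcases (Nat.prime_two.dvd_mul).1 h with h | h
      · have := (Nat.prime_dvd_prime_iff_eq Nat.prime_two hp).1 h
        omega
      · exact h2r h
    rw [e] at hd
    have hc : Nat.Coprime (2 ^ Nat.log 2 n) (p * r1) :=
      Nat.Coprime.pow_left _ ((Nat.Prime.coprime_iff_not_dvd Nat.prime_two).2 n2)
    exact (Nat.pow_dvd_pow_iff_le_right (by norm_num)).1 (hc.dvd_of_dvd_mul_right hd)
  have ha : 3 ≤ a := le_trans (Nat.le_log_of_pow_le (by norm_num) (by omega)) hlog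
  have hpa : p ≤ 4 * 2 ^ a := by
    have h1 := Nat.lt_pow_succ_log_self (b := 2) (by norm_num) n
    have h2 : 2 ^ (Nat.log 2 n) ≤ 2 ^ a := Nat.pow_le_pow_right (by norm_num) hlog
    rw [Nat.succ_eq_add_one, pow_succ] at h1
    omega
  have hb : b ≠ 0 := by
    rintro rfl
    have h : 3 ∣ n.factorial := Nat.dvd_factorial (by norm_num) (by omega)
    rw [hN, e1, e2, pow_zero, one_mul] at h
    rcases (Nat.prime_three.dvd_mul).1 h with h | h
    · have := (Nat.prime_dvd_prime_iff_eq Nat.prime_three hp).1 h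
      omega
    · rcases (Nat.prime_three.dvd_mul).1 h with h | h
      · exact prime_not_dvd_smooth Nat.prime_three Nat.prime_two (by norm_num) _ h
      · exact h3r h
  have hg : g ≠ 0 := by
    rintro rfl
    have h : 5 ∣ n.factorial := Nat.dvd_factorial (by norm_num) (by omega)
    rw [hN, e1, e2, e3, pow_zero, one_mul] at h
    rcases (Nat.prime_five.dvd_mul).1 h with h | h
    · have := (Nat.prime_dvd_prime_iff_eq Nat.prime_five hp).1 h
      omega
    · rcases (Nat.prime_five.dvd_mul).1 h with h | h
      · exact prime_not_dvd_smooth Nat.prime_five Nat.prime_two (by norm_num) _ h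
      · rcases (Nat.prime_five.dvd_mul).1 h with h | h
        · exact prime_not_dvd_smooth Nat.prime_five Nat.prime_three (by norm_num) _ h
        · exact h5r h
  obtain ⟨b', rfl⟩ := Nat.exists_eq_succ_of_ne_zero hb
  obtain ⟨g', rfl⟩ := Nat.exists_eq_succ_of_ne_zero hg
  have hp0 := hp.pos
  have hcore := good_core ha hp hp3 hp6 hpa b' g'
  rw [hfac]
  refine Good.mul_coprime r _ (by positivity) ?_ hcore hr
  have c2 : Nat.Coprime 2 r := (Nat.Prime.coprime_iff_not_dvd Nat.prime_two).2 n2r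
  have c3 : Nat.Coprime 3 r := (Nat.Prime.coprime_iff_not_dvd Nat.prime_three).2 n3r
  have c5 : Nat.Coprime 5 r := (Nat.Prime.coprime_iff_not_dvd Nat.prime_five).2 h5r
  have cp : Nat.Coprime p r := (Nat.Prime.coprime_iff_not_dvd hp).2 npr
  exact (((c2.pow_left a).mul_left cp).mul_left (c3.pow_left _)).mul_left (c5.pow_left _)

/-- For a positive integer `n`, the number `n!` is `3`-layered
if and only if `n ≥ 5` and `n ≠ 10`. -/
theorem factorial_three_layered_iff (n : ℕ) (hn : 0 < n) :
    IsKLayered (n.factorial) 3 ↔ 5 ≤ n ∧ n ≠ 10 := by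
  refine ⟨layered_forward n hn, ?_⟩
  rintro ⟨h5, h10⟩
  apply Good.layered
  rcases Nat.lt_or_ge n 11 with h | h
  · interval_cases n
    · exact good_five
    · exact good_six
    · exact good_seven
    · exact good_eight
    · exact good_nine
    · exact absurd rfl h10
  · exact good_large n h
end

section
/- Let n and m be positive integers with gcd(n, m) = 1. If n is k-layered and σ(m)/(k+1) can be written as the sum of a subset of the set of positive divisors of m, then n·m is (k+1)-layered. -/
/-- Let `n` and `m` be coprime positive integers. If `n` is `k`-layered and
`σ(m) / (k + 1)` is the sum of a subset of the set of positive divisors of `m`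
(expressed as `(k + 1) * S(A) = σ(m)`), then `n * m` is `(k + 1)`-layered. -/
theorem layered_succ_of_subset_sum (n m k : ℕ) (hn : 0 < n) (hm : 0 < m)
    (hcop : Nat.Coprime n m) (h : IsKLayered n k)
    (hA : ∃ A ⊆ m.divisors, (k + 1) * ∑ d ∈ A, d = ∑ d ∈ m.divisors, d) :
    IsKLayered (n * m) (k + 1) := by
  classical
  obtain ⟨c, hc⟩ := h
  obtain ⟨A, hAm, hAs⟩ := hA
  have hga : ∀ a ∈ n.divisors, ∀ b ∈ m.divisors, (a * b).gcd n = a ∧ (a * b).gcd m = b := by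
    intro a ha b hb
    have ha' := Nat.dvd_of_mem_divisors ha
    have hb' := Nat.dvd_of_mem_divisors hb
    constructor
    · rw [Nat.Coprime.gcd_mul_right_cancel a (hcop.symm.coprime_dvd_left hb')]
      exact Nat.gcd_eq_left ha'
    · rw [Nat.Coprime.gcd_mul_left_cancel b (hcop.coprime_dvd_left ha')]
      exact Nat.gcd_eq_left hb'
  have key : ∀ f : ℕ → ℕ, ∑ d ∈ (n * m).divisors, f d
      = ∑ a ∈ n.divisors, ∑ b ∈ m.divisors, f (a * b) := by
    intro f
    rw [← Finset.sum_product']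
    symm
    refine Finset.sum_bij' (fun p _ => p.1 * p.2) (fun d _ => (d.gcd n, d.gcd m)) ?_ ?_ ?_ ?_ ?_
    · rintro ⟨a, b⟩ hp
      simp only [Finset.mem_product, Nat.mem_divisors] at hp ⊢
      exact ⟨Nat.mul_dvd_mul hp.1.1 hp.2.1, by positivity⟩
    · intro d hd
      simp only [Finset.mem_product, Nat.mem_divisors]
      exact ⟨⟨Nat.gcd_dvd_right _ _, hn.ne'⟩, Nat.gcd_dvd_right _ _, hm.ne'⟩
    · rintro ⟨a, b⟩ hp
      rw [Finset.mem_product] at hp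
      obtain ⟨h1, h2⟩ := hga a hp.1 b hp.2
      simp only [h1, h2]
    · intro d hd
      have := Nat.dvd_of_mem_divisors hd
      show d.gcd n * d.gcd m = d
      rw [← Nat.Coprime.gcd_mul d hcop]
      exact Nat.gcd_eq_left this
    · intros; rfl
  let C : ℕ → Fin (k + 1) := fun d =>
    if d.gcd m ∈ A then Fin.last k else (c (d.gcd n)).castSucc
  have hlayer : ∀ i : Fin k,
      k * ∑ d ∈ n.divisors.filter (fun d => c d = i), d = ∑ d ∈ n.divisors, d := by
    intro i
    rw [← Finset.sum_fiberwise n.divisors c (fun d => d), Finset.sum_congr rfl (fun j _ => hc j i)]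
    simp
  have hcomp : ∑ b ∈ m.divisors.filter (fun b => b ∉ A), b = k * ∑ d ∈ A, d := by
    have h1 := Finset.sum_filter_add_sum_filter_not m.divisors (fun b => b ∈ A) (fun b => b)
    rw [Finset.filter_mem_eq_inter, Finset.inter_eq_right.2 hAm, ← hAs] at h1
    linarith
  have hall : ∀ i : Fin (k + 1), ∑ d ∈ (n * m).divisors.filter (fun d => C d = i), d
      = (∑ d ∈ n.divisors, d) * ∑ d ∈ A, d := by
    intro i
    rw [Finset.sum_filter, key]
    induction i using Fin.lastCases with
    | last =>
      have hA2 : ∑ d ∈ A, d = ∑ d ∈ m.divisors, if d ∈ A then d else 0 := by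
        rw [← Finset.sum_filter, Finset.filter_mem_eq_inter, Finset.inter_eq_right.2 hAm]
      rw [hA2, Finset.sum_mul_sum]
      refine Finset.sum_congr rfl fun a ha => Finset.sum_congr rfl fun b hb => ?_
      obtain ⟨h1, h2⟩ := hga a ha b hb
      simp only [C, h1, h2]
      by_cases hb2 : b ∈ A
      · simp [hb2]
      · simp [hb2, (Fin.castSucc_lt_last (c a)).ne]
    | cast i =>
      rw [← hlayer i, mul_comm k, mul_assoc, ← hcomp, Finset.sum_filter, Finset.sum_filter,
        Finset.sum_mul_sum]
      refine Finset.sum_congr rfl fun a ha => Finset.sum_congr rfl fun b hb => ?_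
      obtain ⟨h1, h2⟩ := hga a ha b hb
      simp only [C, h1, h2]
      by_cases hb2 : b ∈ A
      · simp [hb2, (Fin.castSucc_lt_last i).ne']
      · simp [hb2]
  exact ⟨C, fun i j => (hall i).trans (hall j).symm⟩
end

section
/- Let n be a k-multiperfect number (σ(n) = k·n) and let m be a (k+1)-multiperfect number (σ(m) = (k+1)·m) such that n divides m. If n is k-layered, then m is (k+1)-layered. -/
/-- Let `n` be a `k`-multiperfect number (`σ(n) = k * n`) and `m` a `(k+1)`-multiperfect
number (`σ(m) = (k+1) * m`) with `n ∣ m`. If `n` is `k`-layered, then `m` is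
`(k+1)`-layered. -/
theorem multiperfect_layered_step (n m k : ℕ) (hn : 0 < n) (hm : 0 < m)
    (hmuln : (∑ d ∈ n.divisors, d) = k * n)
    (hmulm : (∑ d ∈ m.divisors, d) = (k + 1) * m)
    (hdvd : n ∣ m) (h : IsKLayered n k) :
    IsKLayered m (k + 1) := by
  obtain ⟨c, hc⟩ := h
  obtain ⟨t, rfl⟩ := hdvd
  have ht : 0 < t := Nat.pos_of_mul_pos_left hm
  -- every color class of `n` has sum `n`
  have hS : ∀ i : Fin k, ∑ d ∈ n.divisors.filter (fun d => c d = i), d = n := by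
    intro i
    have hk : 0 < k := i.pos
    have h1 := Finset.sum_fiberwise n.divisors c (fun d => d)
    rw [hmuln, Finset.sum_congr rfl (fun j _ => hc j i)] at h1
    simp only [Finset.sum_const, Finset.card_univ, Fintype.card_fin, smul_eq_mul] at h1
    exact Nat.eq_of_mul_eq_mul_left hk h1
  let col : ℕ → Fin (k + 1) := fun d => if t ∣ d then (c (d / t)).castSucc else Fin.last k
  have hA : ∀ i : Fin k,
      ∑ d ∈ (n * t).divisors.filter (fun d => col d = i.castSucc), d = n * t := by
    intro i
    have himg : (n * t).divisors.filter (fun d => col d = i.castSucc)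
        = (n.divisors.filter (fun d => c d = i)).image (fun d => d * t) := by
      ext d
      simp only [Finset.mem_filter, Nat.mem_divisors, Finset.mem_image]
      constructor
      · rintro ⟨⟨hd, -⟩, hcd⟩
        by_cases htd : t ∣ d
        · obtain ⟨e, rfl⟩ := htd
          simp only [col, dvd_mul_right, if_true, Nat.mul_div_cancel_left e ht] at hcd
          refine ⟨e, ⟨⟨?_, hn.ne'⟩, Fin.castSucc_injective k hcd⟩, mul_comm _ _⟩
          rw [mul_comm n t] at hd
          exact Nat.dvd_of_mul_dvd_mul_left ht hd
        · simp only [col, htd, if_false] at hcd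
          exact absurd hcd.symm (Fin.castSucc_lt_last i).ne
      · rintro ⟨e, ⟨⟨he, -⟩, hce⟩, rfl⟩
        refine ⟨⟨Nat.mul_dvd_mul_right he t, hm.ne'⟩, ?_⟩
        simp only [col, dvd_mul_left, if_true, Nat.mul_div_cancel e ht, hce]
    rw [himg, Finset.sum_image (fun a _ b _ hab => Nat.eq_of_mul_eq_mul_right ht hab),
      ← Finset.sum_mul, hS i]
  have hB : ∑ d ∈ (n * t).divisors.filter (fun d => col d = Fin.last k), d = n * t := by
    have h1 := Finset.sum_fiberwise (n * t).divisors col (fun d => d)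
    rw [hmulm, Fin.sum_univ_castSucc, Finset.sum_congr rfl (fun j _ => hA j)] at h1
    simp only [Finset.sum_const, Finset.card_univ, Fintype.card_fin, smul_eq_mul] at h1
    linarith
  have hC : ∀ i : Fin (k + 1),
      ∑ d ∈ (n * t).divisors.filter (fun d => col d = i), d = n * t := by
    intro i
    induction i using Fin.lastCases with
    | last => exact hB
    | cast j => exact hA j
  exact ⟨col, fun i j => (hC i).trans (hC j).symm⟩
end

section
/- Let n be a near-perfect number, i.e., there exists a proper divisor d of n with σ(n) = 2n + d. Then n is a Zumkeller number if and only if σ(n) is even. -/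
/-- Let `n` be a near-perfect number, i.e., there is a proper divisor `d` of `n` with
`σ(n) = 2 * n + d`. Then `n` is a Zumkeller number (i.e., 2-layered) if and only if
`σ(n)` is even. -/
theorem nearPerfect_zumkeller_iff (n : ℕ) (hn : 0 < n)
    (hnp : ∃ d : ℕ, d ∣ n ∧ d < n ∧ (∑ e ∈ n.divisors, e) = 2 * n + d) :
    IsKLayered n 2 ↔ Even (∑ d ∈ n.divisors, d) := by
  obtain ⟨d, hd, hlt, hs⟩ := hnp
  have split : ∀ c : ℕ → Fin 2,
      ∑ e ∈ n.divisors.filter (fun e => c e = 0), e +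
      ∑ e ∈ n.divisors.filter (fun e => c e = 1), e = ∑ e ∈ n.divisors, e := by
    intro c
    rw [← Finset.sum_filter_add_sum_filter_not n.divisors (fun e => c e = 0)]
    congr 2
    apply Finset.filter_congr
    intro x _
    generalize c x = y
    revert y
    decide
  constructor
  · rintro ⟨c, hc⟩
    have h := split c
    rw [hc 0 1] at h
    exact ⟨_, h.symm⟩
  · intro he
    have hd2 : 2 ∣ d := by
      rw [hs] at he
      obtain ⟨k, hk⟩ := he
      omega
    obtain ⟨m, rfl⟩ := hd2
    have hmn : m ∣ n := (Dvd.intro_left 2 rfl).trans hd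
    have hne : n ≠ m := by omega
    let c : ℕ → Fin 2 := fun x => if x = n ∨ x = m then 0 else 1
    have h0 : ∑ e ∈ n.divisors.filter (fun e => c e = 0), e = n + m := by
      have : n.divisors.filter (fun e => c e = 0) = {n, m} := by
        ext x
        simp only [c, Finset.mem_filter, Nat.mem_divisors, Finset.mem_insert,
          Finset.mem_singleton]
        constructor
        · rintro ⟨_, h⟩
          by_contra hx
          simp [hx] at h
        · intro h
          refine ⟨⟨?_, hn.ne'⟩, by simp [h]⟩
          rcases h with rfl | rfl
          · exact dvd_rfl
          · exact hmn
      rw [this, Finset.sum_pair hne]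
    have h := split c
    have key : ∑ e ∈ n.divisors.filter (fun e => c e = 0), e =
        ∑ e ∈ n.divisors.filter (fun e => c e = 1), e := by omega
    refine ⟨c, fun i j => ?_⟩
    fin_cases i <;> fin_cases j
    · rfl
    · exact key
    · exact key.symm
    · rfl
end

section
/- For every Zumkeller number a, there exists a Zumkeller number b with a < b ≤ a + 12; that is, the difference of two consecutive Zumkeller numbers is at most 12. -/
theorem sum_div_coprime {m n : ℕ} (h : m.Coprime n) (f : ℕ → ℤ) :
    ∑ d ∈ (m * n).divisors, f d = ∑ x ∈ m.divisors, ∑ y ∈ n.divisors, f (x * y) := by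
  rw [Nat.divisors_mul, Finset.mul_def, Finset.sum_image, Finset.sum_product]
  exact h.mul_injOn_divisors

theorem layered_of_signed (n : ℕ) (P : ℕ → Prop) [DecidablePred P]
    (h : ∑ d ∈ n.divisors, (if P d then (d : ℤ) else -(d : ℤ)) = 0) : IsKLayered n 2 := by
  refine ⟨fun d => if P d then 0 else 1, ?_⟩
  have h2 : ∑ d ∈ n.divisors.filter (fun d => P d), d
      = ∑ d ∈ n.divisors.filter (fun d => ¬ P d), d := by
    rw [Finset.sum_ite, Finset.sum_neg_distrib] at h
    zify
    linarith
  have e0 : ∀ d, ((if P d then 0 else 1 : Fin 2) = 0) ↔ P d := by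
    intro d; split_ifs <;> simp_all
  have e1 : ∀ d, ((if P d then 0 else 1 : Fin 2) = 1) ↔ ¬ P d := by
    intro d; split_ifs <;> simp_all
  intro i j
  fin_cases i <;> fin_cases j <;>
    simp only [Fin.zero_eta, Fin.mk_one, Fin.isValue, e0, e1, h2]

theorem weights_sum (k : ℕ) :
    ∑ j ∈ Finset.range k, (-(2 : ℤ) ^ (j + 2)) = 4 - 2 ^ (k + 2) := by
  induction k with
  | zero => norm_num
  | succ k ih => rw [Finset.sum_range_succ, ih]; ring

theorem layered_six (k m : ℕ) (h2 : ¬ 2 ∣ m) (h3 : ¬ 3 ∣ m) :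
    IsKLayered (2 ^ (k + 1) * (3 * m)) 2 := by
  have c2 : Nat.Coprime 2 m := (Nat.Prime.coprime_iff_not_dvd Nat.prime_two).2 h2
  have c3 : Nat.Coprime 3 m := (Nat.Prime.coprime_iff_not_dvd Nat.prime_three).2 h3
  apply layered_of_signed _ (fun d => (3 ∣ d ∧ 2 ^ (k + 1) ∣ d) ∨
    (¬ 3 ∣ d ∧ 2 ∣ d ∧ ¬ 2 ^ (k + 1) ∣ d))
  rw [sum_div_coprime (Nat.Coprime.pow_left _ (Nat.Coprime.mul_right (by norm_num : Nat.Coprime 2 3) c2)),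
    Nat.sum_divisors_prime_pow Nat.prime_two]
  have key : ∀ i ∈ Finset.range (k + 1 + 1),
      ∑ y ∈ (3 * m).divisors, (if (3 ∣ 2 ^ i * y ∧ 2 ^ (k + 1) ∣ 2 ^ i * y) ∨
        (¬ 3 ∣ 2 ^ i * y ∧ 2 ∣ 2 ^ i * y ∧ ¬ 2 ^ (k + 1) ∣ 2 ^ i * y)
        then ((2 ^ i * y : ℕ) : ℤ) else -((2 ^ i * y : ℕ) : ℤ))
      = (if i = k + 1 then 2 ^ (k + 2) else if i = 0 then -4 else -2 ^ (i + 1)) *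
        ∑ t ∈ m.divisors, (t : ℤ) := by
    intro i hi
    have hi' : i ≤ k + 1 := by simpa [Nat.lt_succ_iff] using hi
    rw [sum_div_coprime c3, Nat.Prime.sum_divisors Nat.prime_three, ← Finset.sum_add_distrib,
      Finset.mul_sum]
    refine Finset.sum_congr rfl fun t ht => ?_
    have htm := Nat.dvd_of_mem_divisors ht
    have t2 : ¬ 2 ∣ t := fun h => h2 (h.trans htm)
    have t3 : ¬ 3 ∣ t := fun h => h3 (h.trans htm)
    have a3 : ¬ 3 ∣ 2 ^ i := fun h => by
      have := Nat.prime_three.dvd_of_dvd_pow h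
      omega
    have b1 : ¬ 3 ∣ 2 ^ i * (1 * t) := by
      rw [one_mul, Nat.prime_three.dvd_mul]; tauto
    have b2 : 3 ∣ 2 ^ i * (3 * t) := ⟨2 ^ i * t, by ring⟩
    have gen : ∀ u, ¬ 2 ∣ u → (2 ^ (k + 1) ∣ 2 ^ i * u ↔ i = k + 1) := by
      intro u hu
      have cu : Nat.Coprime (2 ^ (k + 1)) u :=
        Nat.Coprime.pow_left _ ((Nat.Prime.coprime_iff_not_dvd Nat.prime_two).2 hu)
      rw [cu.dvd_mul_right, Nat.pow_dvd_pow_iff_le_right (by norm_num)]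
      omega
    have gen2 : ∀ u, ¬ 2 ∣ u → (2 ∣ 2 ^ i * u ↔ i ≠ 0) := by
      intro u hu
      rw [Nat.prime_two.dvd_mul]
      constructor
      · rintro (h | h) rfl
        · norm_num at h
        · exact hu h
      · intro h; exact Or.inl (dvd_pow_self 2 h)
    have u1 : ¬ 2 ∣ 1 * t := by simpa using t2
    have u3 : ¬ 2 ∣ 3 * t := by omega
    simp only [b1, b2, gen _ u1, gen _ u3, gen2 _ u1, gen2 _ u3]
    by_cases e : i = k + 1
    · subst e; simp; ring
    · by_cases e0 : i = 0
      · subst e0; simp; ring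
      · simp [e, e0]; ring
  refine (Finset.sum_congr rfl key).trans ?_
  rw [← Finset.sum_mul, Finset.sum_range_succ, Finset.sum_range_succ']
  have : ∑ j ∈ Finset.range k, (if j + 1 = k + 1 then (2 : ℤ) ^ (k + 2) else
      if j + 1 = 0 then -4 else -2 ^ (j + 1 + 1)) = 4 - 2 ^ (k + 2) := by
    rw [← weights_sum]
    refine Finset.sum_congr rfl fun j hj => ?_
    have := Finset.mem_range.1 hj
    rw [if_neg (by omega), if_neg (by omega)]
  rw [this]
  simp
  left
  ring

/-- For every Zumkeller number `a` there is a Zumkeller number `b` with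
`a < b ≤ a + 12`: the difference of two consecutive Zumkeller numbers is at most 12. -/
theorem zumkeller_gap_le_twelve (a : ℕ) (ha : 0 < a) (h : IsKLayered a 2) :
    ∃ b : ℕ, a < b ∧ b ≤ a + 12 ∧ IsKLayered b 2 := by
  obtain ⟨q, h1, h2, h3⟩ : ∃ q, a < 6 * q ∧ 6 * q ≤ a + 12 ∧ ¬ 3 ∣ q := by
    by_cases h : 3 ∣ a / 6 + 1
    · exact ⟨a / 6 + 2, by omega, by omega, by omega⟩
    · exact ⟨a / 6 + 1, by omega, by omega, h⟩
  refine ⟨6 * q, h1, h2, ?_⟩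
  obtain ⟨k, m, hm, rfl⟩ :=
    Nat.exists_eq_pow_mul_and_not_dvd (n := q) (by omega) 2 (by norm_num)
  have := layered_six k m hm (fun h => h3 (h.mul_left _))
  convert this using 1
  ring
end
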